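/- (Approximation of hierarchical composition functions by bounded-parameter DNNs.) Let a ≥ 1, ν ∈ [0,1), q ∈ ℕ, N ∈ ℕ^q, and let P ⊆ [β_min, β_max] × {1, …, d_max} be a finite constraint set with β_min > 0. Then there exist positive constants C̃_L, C̃_r, C̃_B and c_2 (depending on a, ν, N, P, K, F, C_Lip but not on n) such that for every f_0 : ℝ^d → ℝ following the hierarchical composition structure H(N, P) and every sufficiently large n ∈ ℕ, there exists a network f ∈ F_{ρν}^{DNN}(⌈C̃_L log₂ n⌉, ⌈C̃_r · max_{(β', d') ∈ P} n^{d'/(2(2β'+d'))}⌉, C̃_B) with sup_{x ∈ [−a,a]^d} |f(x) − f_0(x)| ≤ c_2 · max_{(β', d') ∈ P} n^{−β'/(2β'+d')}. -/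

import Mathlib

noncomputable section

/-- Leaky-ReLU activation. -/
def lrelu (ν x : ℝ) : ℝ := max x (ν * x)

/-- A fully connected Leaky-ReLU network with input dimension `d` and hidden width `r`:
a first affine layer `ℝ^d → ℝ^r`, a list of inner affine layers `ℝ^r → ℝ^r`, and an
output affine layer `ℝ^r → ℝ`.  Each affine layer except the last is followed by the
componentwise Leaky-ReLU activation.  The number of hidden layers (the depth) is
`hid.length + 1`. -/
structure LNet (d r : ℕ) where
  W0 : Fin r → Fin d → ℝ
  b0 : Fin r → ℝ
  hid : List ((Fin r → Fin r → ℝ) × (Fin r → ℝ))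
  Wout : Fin r → ℝ
  bout : ℝ

/-- Evaluation of a Leaky-ReLU network. -/
def LNet.eval (ν : ℝ) {d r : ℕ} (net : LNet d r) (x : Fin d → ℝ) : ℝ :=
  let h := net.hid.foldl
    (fun (h : Fin r → ℝ) p => fun i => lrelu ν ((∑ j, p.1 i j * h j) + p.2 i))
    (fun i => lrelu ν ((∑ j, net.W0 i j * x j) + net.b0 i))
  (∑ i, net.Wout i * h i) + net.bout

/-- All weights and biases of the network are bounded by `B` in absolute value. -/
def LNet.bounded {d r : ℕ} (net : LNet d r) (B : ℝ) : Prop :=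
  (∀ i j, |net.W0 i j| ≤ B) ∧ (∀ i, |net.b0 i| ≤ B) ∧
  (∀ p ∈ net.hid, (∀ i j, |p.1 i j| ≤ B) ∧ (∀ i, |p.2 i| ≤ B)) ∧
  (∀ i, |net.Wout i| ≤ B) ∧ |net.bout| ≤ B

/-- Membership in the class `F_{ρν}^{DNN}(L, r, B)` of Leaky-ReLU networks with
architecture `(L, (d, r, …, r, 1))` and all parameters bounded by `B`. -/
def memDNN (ν : ℝ) (d L r : ℕ) (B : ℝ) (f : (Fin d → ℝ) → ℝ) : Prop :=
  ∃ net : LNet d r, net.hid.length + 1 = L ∧ net.bounded B ∧ ∀ x, f x = net.eval ν x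

/-- The cube `[−a,a]^d`. -/
def cube (a : ℝ) (d : ℕ) : Set (Fin d → ℝ) := {x | ∀ i, x i ∈ Set.Icc (-a) a}

/-- Partial derivative of `f : ℝ^d → ℝ` in coordinate `i`. -/
def pder {d : ℕ} (i : Fin d) (f : (Fin d → ℝ) → ℝ) : (Fin d → ℝ) → ℝ :=
  fun x => fderiv ℝ f x (Pi.single i 1)

/-- Multi-index partial derivative `∂^α f = ∂_1^{α 1} ⋯ ∂_d^{α d} f`. -/
def pderm {d : ℕ} (α : Fin d → ℕ) (f : (Fin d → ℝ) → ℝ) : (Fin d → ℝ) → ℝ :=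
  (List.finRange d).foldr (fun i g => (pder i)^[α i] g) f

/-- Membership in the Hölder ball `H_d^β(K)` on `[−a,a]^d`: `f` is `⌊β⌋`-times
continuously differentiable and there are bounds `S α` on `|∂^α f|` over the cube for all
multi-indices with `|α|₁ < β`, and Hölder constants `H α` for `∂^α f` (with exponent
`β − ⌊β⌋`, with respect to the sup-norm) for all multi-indices with `|α|₁ = ⌊β⌋`, whose
total sum is at most `K`. -/
def memHolder (a : ℝ) (d : ℕ) (β K : ℝ) (f : (Fin d → ℝ) → ℝ) : Prop :=
  ContDiff ℝ (⌊β⌋₊ : ℕ∞) f ∧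
  ∃ S H : (Fin d → Fin (⌊β⌋₊ + 1)) → ℝ,
    (∀ α : Fin d → Fin (⌊β⌋₊ + 1), ((∑ i, (α i : ℕ) : ℕ) : ℝ) < β →
      ∀ x ∈ cube a d, |pderm (fun i => (α i : ℕ)) f x| ≤ S α) ∧
    (∀ α : Fin d → Fin (⌊β⌋₊ + 1), (∑ i, (α i : ℕ)) = ⌊β⌋₊ →
      ∀ x₁ ∈ cube a d, ∀ x₂ ∈ cube a d, x₁ ≠ x₂ →
        |pderm (fun i => (α i : ℕ)) f x₁ - pderm (fun i => (α i : ℕ)) f x₂| ≤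
          H α * ‖x₁ - x₂‖ ^ (β - (⌊β⌋₊ : ℝ))) ∧
    (∑ α ∈ Finset.univ.filter
        (fun α : Fin d → Fin (⌊β⌋₊ + 1) => ((∑ i, (α i : ℕ) : ℕ) : ℝ) < β), S α) +
      (∑ α ∈ Finset.univ.filter
        (fun α : Fin d → Fin (⌊β⌋₊ + 1) => (∑ i, (α i : ℕ)) = ⌊β⌋₊), H α) ≤ K

/-- `f : ℝ^d → ℝ` follows the hierarchical composition structure `H(N, P)` (with constants
`K, F, C_Lip` and `N_q := 1`): there are functions `f_{l,i}` (`0 ≤ l ≤ q`, `0 ≤ i < N_l`)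
such that each `f_{0,i}` is a coordinate projection, each `f_{l,i}` (`1 ≤ l ≤ q`) is
obtained by applying a `C_Lip`-Lipschitz function `g_{l,i} ∈ H_{d_{l,i}}^{β_{l,i}}(K)` with
`(β_{l,i}, d_{l,i}) ∈ P`, `Σᵢ d_{l,i} = N_{l−1}` and `‖g_{l,i}‖_∞ ≤ F` to consecutive
blocks of the previous level, and `f = f_{q,1}`. -/
def followsHCS (a : ℝ) (d q : ℕ) (N : ℕ → ℕ) (P : Finset (ℝ × ℕ)) (K F CLip : ℝ)
    (f : (Fin d → ℝ) → ℝ) : Prop :=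
  0 < q ∧ N q = 1 ∧
  ∃ (fl : ℕ → ℕ → (Fin d → ℝ) → ℝ)
    (βh : ℕ → ℕ → ℝ) (dh : ℕ → ℕ → ℕ)
    (g : (l : ℕ) → (i : ℕ) → (Fin (dh l i) → ℝ) → ℝ),
    (∀ i < N 0, ∃ j : Fin d, ∀ x, fl 0 i x = x j) ∧
    (∀ l, 1 ≤ l → l ≤ q → ∀ i < N l,
      (βh l i, dh l i) ∈ P ∧
      (∀ y z : Fin (dh l i) → ℝ,
        |g l i y - g l i z| ≤ CLip * Real.sqrt (∑ j, (y j - z j) ^ 2)) ∧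
      memHolder (max a (2 * F)) (dh l i) (βh l i) K (g l i) ∧
      (∀ y, |g l i y| ≤ F) ∧
      (∀ x, fl l i x =
        g l i (fun j => fl (l - 1) ((∑ i' ∈ Finset.range i, dh l i') + j) x))) ∧
    (∀ l, 1 ≤ l → l ≤ q → (∑ i ∈ Finset.range (N l), dh l i) = N (l - 1)) ∧
    (∀ x, f x = fl q 0 x)

/-- `max_{(β',d') ∈ P} n^{−β'/(2β'+d')}`, the hierarchical-composition approximation rate. -/
def maxRate (P : Finset (ℝ × ℕ)) (hP : P.Nonempty) (n : ℕ) : ℝ :=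
  P.sup' hP fun p => (n : ℝ) ^ (-(p.1 / (2 * p.1 + p.2)))

/-- `max_{(β',d') ∈ P} n^{d'/(2(2β'+d'))}`, which governs the network width. -/
def maxWidthExp (P : Finset (ℝ × ℕ)) (hP : P.Nonempty) (n : ℕ) : ℝ :=
  P.sup' hP fun p => (n : ℝ) ^ ((p.2 : ℝ) / (2 * (2 * p.1 + p.2)))

/-! A Hölder function is close to its Taylor polynomial around a nearby point of the grid of mesh
`4 ^ (-e)`. Writing such a grid point in two stages, `2 ^ e` coarse cells per axis with `2 ^ e` fine
cells in each of them, a ReLU network of depth `O(e)` and width only `O(2 ^ (e * d'))` can look up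
the grid point together with its Taylor coefficients, and products are computed by approximating the
square function. The look-up is wrong close to the cell boundaries, where the continuous ramps
replace the jumps of a step function. This is repaired by using `2 * d' + 1` shifted grids: each
coordinate of `x` is close to the boundaries of at most one of them, so a majority of the
approximations is accurate at `x`, and so is their median. The exponent `e` is chosen as
`log₂ n / (2 * (2 * β' + d'))`.

Errors propagate additively through the levels of the hierarchy because the components are
Lipschitz. Finally `x⁺` is a combination of `lrelu ν x` and `lrelu ν (-x)`, so ReLU networks become
Leaky-ReLU networks of twice the width. -/

/-! ### ReLU networks with bounded parameters -/

section ReluNet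

variable {ι κ μ : Type} [Fintype ι]

/-- Affine forms `x ↦ ∑ i, w i * x i + b` all of whose coefficients are at most `B` in absolute
value: the preactivations of the neurons of a network with parameters bounded by `B`. -/
def BoundedAffine (B : ℝ) (f : (ι → ℝ) → ℝ) : Prop :=
  ∃ (w : ι → ℝ) (b : ℝ), (∀ i, |w i| ≤ B) ∧ |b| ≤ B ∧ ∀ x, f x = ∑ i, w i * x i + b

namespace BoundedAffine

variable {B B' : ℝ} {f g : (ι → ℝ) → ℝ}

theorem nonneg (hf : BoundedAffine B f) : 0 ≤ B :=
  let ⟨_, _, _, hb, _⟩ := hf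
  (abs_nonneg _).trans hb

theorem mono (hB : B ≤ B') (hf : BoundedAffine B f) : BoundedAffine B' f :=
  let ⟨w, b, hw, hb, h⟩ := hf
  ⟨w, b, fun i => (hw i).trans hB, hb.trans hB, h⟩

theorem const (c : ℝ) : BoundedAffine |c| fun _ : ι → ℝ => c :=
  ⟨0, c, by simp, le_rfl, by simp⟩

theorem coord (i : ι) : BoundedAffine 1 fun x : ι → ℝ => x i := by
  classical
  refine ⟨Pi.single i 1, 0, fun j => ?_, by simp, fun x => ?_⟩
  · by_cases h : j = i <;> simp [h]
  · simp [Pi.single_apply]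

theorem const_mul (c : ℝ) (hf : BoundedAffine B f) : BoundedAffine (|c| * B) fun x => c * f x := by
  obtain ⟨w, b, hw, hb, h⟩ := hf
  refine ⟨fun i => c * w i, c * b, fun i => ?_, ?_, fun x => ?_⟩
  · rw [abs_mul]; gcongr; exact hw i
  · rw [abs_mul]; gcongr
  · simp only [h, mul_add, Finset.mul_sum, mul_assoc]

theorem neg (hf : BoundedAffine B f) : BoundedAffine B fun x => -f x := by
  simpa using hf.const_mul (-1)

theorem add (hf : BoundedAffine B f) (hg : BoundedAffine B' g) :
    BoundedAffine (B + B') fun x => f x + g x := by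
  obtain ⟨w, b, hw, hb, hf⟩ := hf
  obtain ⟨w', b', hw', hb', hg⟩ := hg
  refine ⟨w + w', b + b', fun i => (abs_add_le _ _).trans (add_le_add (hw i) (hw' i)),
    (abs_add_le _ _).trans (add_le_add hb hb'), fun x => ?_⟩
  simp only [hf, hg, Pi.add_apply, add_mul, Finset.sum_add_distrib]
  ring

theorem sub (hf : BoundedAffine B f) (hg : BoundedAffine B' g) :
    BoundedAffine (B + B') fun x => f x - g x := by
  simpa only [sub_eq_add_neg] using hf.add hg.neg

theorem comp_injective [Fintype μ] {g : (μ → ℝ) → ℝ} (hg : BoundedAffine B g) {e : μ → ι}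
    (he : Function.Injective e) : BoundedAffine B fun x : ι → ℝ => g (x ∘ e) := by
  have hB := hg.nonneg
  obtain ⟨w, b, hw, hb, h⟩ := hg
  refine ⟨Function.extend e w 0, b, fun i => ?_, hb, fun x => ?_⟩
  · by_cases hi : ∃ m, e m = i
    · obtain ⟨m, rfl⟩ := hi
      rw [he.extend_apply]
      exact hw m
    · simpa [Function.extend_apply' _ _ _ hi] using hB
  · refine (h _).trans (congrArg (· + b) (Fintype.sum_of_injective e he _ _ ?_ ?_))
    · intro i hi
      simp [Function.extend_apply' _ _ _ (show ¬∃ m, e m = i from hi)]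
    · intro m
      rw [he.extend_apply, Function.comp_apply]

theorem linear [Fintype μ] {w : μ → ℝ} (hB : 0 ≤ B) (hw : ∀ m, |w m| ≤ B) {e : μ → ι}
    (he : Function.Injective e) : BoundedAffine B fun x : ι → ℝ => ∑ m, w m * x (e m) :=
  comp_injective ⟨w, 0, hw, by simpa, fun _ => (add_zero _).symm⟩ he

theorem sum_coord [Fintype μ] {e : μ → ι} (he : Function.Injective e) :
    BoundedAffine 1 fun x : ι → ℝ => ∑ m, x (e m) := by
  simpa only [one_mul] using
    linear (w := fun _ => 1) zero_le_one (fun _ => abs_one.le) he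

theorem comp_combination {a b c : ℝ} (hf : BoundedAffine B f) (ha : |a| ≤ c) (hb : |b| ≤ c)
    (hc : 1 ≤ c) :
    BoundedAffine (c * B)
      fun z : ι ⊕ ι → ℝ => f fun i => a * z (Sum.inl i) + b * z (Sum.inr i) := by
  have hB := hf.nonneg
  obtain ⟨w, v, hw, hv, h⟩ := hf
  refine ⟨Sum.elim (fun i => a * w i) fun i => b * w i, v, ?_, ?_, fun z => ?_⟩
  · rintro (i | i) <;> refine (abs_mul _ _).trans_le ?_
    exacts [mul_le_mul ha (hw i) (abs_nonneg _) (by positivity),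
      mul_le_mul hb (hw i) (abs_nonneg _) (by positivity)]
  · exact hv.trans (le_mul_of_one_le_left hB hc)
  · simp only [h, Fintype.sum_sum_type, Sum.elim_inl, Sum.elim_inr, ← Finset.sum_add_distrib]
    congr 1
    exact Finset.sum_congr rfl fun i _ => by ring

end BoundedAffine

/-- Vector-valued functions computed by a ReLU network with `L` hidden layers of width at most `W`
and with weights and biases at most `B` in absolute value; the activation is the positive part. -/
def ReluNet (B : ℝ) (W : ℕ) : (L : ℕ) → {κ : Type} → ((ι → ℝ) → κ → ℝ) → Prop
  | 0, _, f => ∀ k, BoundedAffine B fun x => f x k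
  | L + 1, _, f => ∃ (μ : Type) (_ : Fintype μ) (h : (ι → ℝ) → μ → ℝ),
      ReluNet B W L h ∧ Fintype.card μ ≤ W ∧
        ∀ k, ∃ g : (μ → ℝ) → ℝ, BoundedAffine B g ∧ ∀ x, f x k = g (h x)⁺

namespace ReluNet

variable {B B' : ℝ} {W W' L L' : ℕ} {f : (ι → ℝ) → κ → ℝ}

theorem mono (hB : B ≤ B') (hW : W ≤ W') :
    ∀ {L : ℕ} {κ : Type} {f : (ι → ℝ) → κ → ℝ}, ReluNet B W L f → ReluNet B' W' L f
  | 0, _, _, hf => fun k => (hf k).mono hB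
  | _ + 1, _, _, ⟨μ, _, h, hh, hμ, hg⟩ =>
    ⟨μ, _, h, mono hB hW hh, hμ.trans hW, fun k =>
      let ⟨g, hgB, hgf⟩ := hg k
      ⟨g, hgB.mono hB, hgf⟩⟩

theorem reindex (hf : ReluNet B W L f) (e : μ → κ) : ReluNet B W L fun x m => f x (e m) := by
  cases L with
  | zero => exact fun m => hf (e m)
  | succ L =>
    obtain ⟨ν, _, h, hh, hν, hg⟩ := hf
    exact ⟨ν, _, h, hh, hν, fun m => hg (e m)⟩

theorem double (hf : ReluNet B W L f) :
    ReluNet B W L fun x => Sum.elim (f x) fun k => -f x k := by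
  cases L with
  | zero =>
    rintro (k | k)
    exacts [hf k, (hf k).neg]
  | succ L =>
    obtain ⟨ν, _, h, hh, hν, hg⟩ := hf
    refine ⟨ν, _, h, hh, hν, ?_⟩
    rintro (k | k) <;> obtain ⟨g, hgB, hgf⟩ := hg k
    exacts [⟨g, hgB, hgf⟩, ⟨fun z => -g z, hgB.neg, fun x => congrArg Neg.neg (hgf x)⟩]

theorem sigma {I : Type} [Fintype I] {w : I → ℕ} :
    ∀ {L : ℕ} {κ : I → Type} {f : (i : I) → (ι → ℝ) → κ i → ℝ},
      (∀ i, ReluNet B (w i) L (f i)) →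
        ReluNet B (∑ i, w i) L fun x (s : Σ i, κ i) => f s.1 x s.2
  | 0, _, _, hf => fun s => hf s.1 s.2
  | L + 1, _, _, hf => by
    choose ν _ h hh hν hg using hf
    refine ⟨Σ i, ν i, inferInstance, fun x s => h s.1 x s.2, sigma hh, ?_, fun s => ?_⟩
    · rw [Fintype.card_sigma]
      exact Finset.sum_le_sum fun i _ => hν i
    · obtain ⟨g, hgB, hgf⟩ := hg s.1 s.2
      exact ⟨_, hgB.comp_injective sigma_mk_injective, hgf⟩

variable [Fintype κ]

-- The identity `y = y⁺ - (-y)⁺` turns an affine layer following `f` into a hidden layer.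
theorem comp_affine {g : (κ → ℝ) → μ → ℝ} (hf : ReluNet B W L f)
    (hg : ∀ m, BoundedAffine B fun y => g y m) (hW : 2 * Fintype.card κ ≤ W) :
    ReluNet B W (L + 1) fun x => g (f x) := by
  refine ⟨κ ⊕ κ, inferInstance, _, hf.double, by rw [Fintype.card_sum]; omega, fun m =>
    ⟨_, ((hg m).comp_combination (a := 1) (b := -1) (c := 1) (by simp) (by simp) le_rfl).mono
      (by simp), fun x => ?_⟩⟩
  simp [posPart_neg, ← sub_eq_add_neg, posPart_sub_negPart]

theorem comp {L₁ : ℕ} (hf : ReluNet B W L₁ f) (hW : 2 * Fintype.card κ ≤ W) :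
    ∀ {L₂ : ℕ} {μ : Type} {g : (κ → ℝ) → μ → ℝ}, ReluNet B W L₂ g →
      ReluNet B W (L₁ + 1 + L₂) fun x => g (f x)
  | 0, _, _, hg => hf.comp_affine hg hW
  | _ + 1, _, _, ⟨ν, _, h, hh, hν, hg⟩ =>
    ⟨ν, _, fun x => h (f x), comp hf hW hh, hν, fun k =>
      let ⟨g, hgB, hgf⟩ := hg k
      ⟨g, hgB, fun x => hgf (f x)⟩⟩

theorem pad (hf : ReluNet B W L f) (hB : 1 ≤ B) (hW : 2 * Fintype.card κ ≤ W) (hL : L ≤ L') :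
    ReluNet B W L' f := by
  induction L', hL using Nat.le_induction with
  | base => exact hf
  | succ _ _ ih => exact ih.comp_affine (g := id) (fun k => (BoundedAffine.coord k).mono hB) hW

end ReluNet

end ReluNet

/-! ### Simulation by Leaky-ReLU networks -/

section LeakyRelu

variable {ν : ℝ}

theorem lrelu_of_nonneg (hν : |ν| < 1) {x : ℝ} (hx : 0 ≤ x) : lrelu ν x = x :=
  max_eq_left (mul_le_of_le_one_left hx (abs_lt.1 hν).2.le)

theorem lrelu_of_nonpos (hν : |ν| < 1) {x : ℝ} (hx : x ≤ 0) : lrelu ν x = ν * x :=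
  max_eq_right (by nlinarith [abs_lt.1 hν])

theorem one_sub_sq_pos_of_abs_lt_one (hν : |ν| < 1) : 0 < 1 - ν ^ 2 :=
  sub_pos.2 ((sq_lt_one_iff_abs_lt_one ν).2 hν)

theorem posPart_eq_combination_lrelu (hν : |ν| < 1) (x : ℝ) :
    x⁺ = 1 / (1 - ν ^ 2) * lrelu ν x + ν / (1 - ν ^ 2) * lrelu ν (-x) := by
  have hpos := (one_sub_sq_pos_of_abs_lt_one hν).ne'
  rcases le_total x 0 with hx | hx
  · rw [posPart_eq_zero.2 hx, lrelu_of_nonpos hν hx, lrelu_of_nonneg hν (neg_nonneg.2 hx)]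
    ring
  · rw [posPart_eq_self.2 hx, lrelu_of_nonneg hν hx, lrelu_of_nonpos hν (neg_nonpos.2 hx)]
    field_simp
    ring

/-- The functions `ℝ^d → ℝ^r` that occur as the `L`-th hidden layer, after activation, of a
Leaky-ReLU network of width `r` with weights and biases bounded by `B`. -/
inductive IsLeakyLayer (ν B : ℝ) {d r : ℕ} : ℕ → ((Fin d → ℝ) → Fin r → ℝ) → Prop
  | first {h : (Fin d → ℝ) → Fin r → ℝ} (hh : ∀ i, BoundedAffine B fun x => h x i) :
      IsLeakyLayer ν B 1 fun x i => lrelu ν (h x i)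
  | next {L : ℕ} {z : (Fin d → ℝ) → Fin r → ℝ} {h : (Fin r → ℝ) → Fin r → ℝ}
      (hz : IsLeakyLayer ν B L z) (hh : ∀ i, BoundedAffine B fun y => h y i) :
      IsLeakyLayer ν B (L + 1) fun x i => lrelu ν (h (z x) i)

variable {B : ℝ} {d r : ℕ}

theorem IsLeakyLayer.exists_eq_foldl {L : ℕ} {z : (Fin d → ℝ) → Fin r → ℝ}
    (hz : IsLeakyLayer ν B L z) :
    ∃ (W₀ : Fin r → Fin d → ℝ) (b₀ : Fin r → ℝ)
      (hid : List ((Fin r → Fin r → ℝ) × (Fin r → ℝ))),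
      hid.length + 1 = L ∧ (∀ i j, |W₀ i j| ≤ B) ∧ (∀ i, |b₀ i| ≤ B) ∧
      (∀ p ∈ hid, (∀ i j, |p.1 i j| ≤ B) ∧ ∀ i, |p.2 i| ≤ B) ∧
      ∀ x, z x = hid.foldl
        (fun (h : Fin r → ℝ) p => fun i => lrelu ν ((∑ j, p.1 i j * h j) + p.2 i))
        (fun i => lrelu ν ((∑ j, W₀ i j * x j) + b₀ i)) := by
  induction hz with
  | first hh =>
    choose W b hW hb h using hh
    exact ⟨W, b, [], rfl, hW, hb, by simp, fun x => by simp only [h, List.foldl_nil]⟩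
  | next _ hh ih =>
    obtain ⟨W₀, b₀, hid, hlen, hW₀, hb₀, hhid, hz⟩ := ih
    choose W b hW hb h using hh
    refine ⟨W₀, b₀, hid ++ [(W, b)], by simp [hlen], hW₀, hb₀, fun p hp => ?_, fun x => ?_⟩
    · rcases List.mem_append.1 hp with hp | hp
      · exact hhid p hp
      · rw [List.mem_singleton.1 hp]
        exact ⟨hW, hb⟩
    · simp only [h, hz x, List.foldl_append, List.foldl_cons, List.foldl_nil]

theorem IsLeakyLayer.memDNN {L : ℕ} {z : (Fin d → ℝ) → Fin r → ℝ} (hz : IsLeakyLayer ν B L z)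
    {g : (Fin r → ℝ) → ℝ} (hg : BoundedAffine B g) : memDNN ν d L r B fun x => g (z x) := by
  obtain ⟨W₀, b₀, hid, hlen, hW₀, hb₀, hhid, hz⟩ := hz.exists_eq_foldl
  obtain ⟨w, b, hw, hb, hg⟩ := hg
  exact ⟨⟨W₀, b₀, hid, w, b⟩, hlen, ⟨hW₀, hb₀, hhid, hw, hb⟩, fun x =>
    (hg _).trans (by rw [hz x]; rfl)⟩

-- Each ReLU neuron is replaced by the two Leaky-ReLU neurons of `posPart_eq_combination_lrelu`.
theorem exists_leaky_layer_of_posPart (hν : |ν| < 1) {σ μ : Type} [Fintype σ] [Fintype μ]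
    (hB : 0 ≤ B) (hr : 2 * Fintype.card μ ≤ r) {u : (σ → ℝ) → μ → ℝ}
    (hu : ∀ m, BoundedAffine (1 / (1 - ν ^ 2) * B) fun y => u y m) :
    ∃ h : (σ → ℝ) → Fin r → ℝ, (∀ i, BoundedAffine (1 / (1 - ν ^ 2) * B) fun y => h y i) ∧
      ∀ g : (μ → ℝ) → ℝ, BoundedAffine B g → ∃ g' : (Fin r → ℝ) → ℝ,
        BoundedAffine (1 / (1 - ν ^ 2) * B) g' ∧
          ∀ y, g (u y)⁺ = g' fun i => lrelu ν (h y i) := by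
  have hpos := one_sub_sq_pos_of_abs_lt_one hν
  obtain ⟨e⟩ : Nonempty (μ ⊕ μ ↪ Fin r) := by
    rw [Function.Embedding.nonempty_iff_card_le, Fintype.card_sum, Fintype.card_fin]
    omega
  refine ⟨fun y => Function.extend e (Sum.elim (u y) fun m => -u y m) 0, fun i => ?_,
    fun g hg => ?_⟩
  · by_cases hi : ∃ s, e s = i
    · obtain ⟨m | m, rfl⟩ := hi <;> simp only [e.injective.extend_apply]
      exacts [hu m, (hu m).neg]
    · simp only [Function.extend_apply' _ _ _ hi]
      exact (BoundedAffine.const 0).mono (by rw [abs_zero]; positivity)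
  · have hsum := hg.comp_combination (a := 1 / (1 - ν ^ 2)) (b := ν / (1 - ν ^ 2))
      (c := 1 / (1 - ν ^ 2)) (abs_of_pos (by positivity)).le
      (by rw [abs_div, abs_of_pos hpos]; gcongr)
      ((one_le_div hpos).2 (sub_le_self _ (sq_nonneg ν)))
    refine ⟨_, hsum.comp_injective e.injective, fun y => ?_⟩
    simp only [Function.comp_apply, e.injective.extend_apply, Sum.elim_inl, Sum.elim_inr,
      ← posPart_eq_combination_lrelu hν]
    rfl

theorem ReluNet.exists_isLeakyLayer (hν : |ν| < 1) (hB : 0 ≤ B) {W : ℕ} (hr : 2 * W ≤ r) :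
    ∀ {L : ℕ} {κ : Type} {f : (Fin d → ℝ) → κ → ℝ}, ReluNet B W (L + 1) f →
      ∃ z : (Fin d → ℝ) → Fin r → ℝ, IsLeakyLayer ν (1 / (1 - ν ^ 2) * B) (L + 1) z ∧
        ∀ k, ∃ g : (Fin r → ℝ) → ℝ, BoundedAffine (1 / (1 - ν ^ 2) * B) g ∧
          ∀ x, f x k = g (z x)
  | 0, κ, f, ⟨μ, _, u, hu, hμ, hf⟩ => by
    have hone : 1 ≤ 1 / (1 - ν ^ 2) :=
      (one_le_div (one_sub_sq_pos_of_abs_lt_one hν)).2 (sub_le_self _ (sq_nonneg ν))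
    obtain ⟨h, hh, hsim⟩ := exists_leaky_layer_of_posPart (r := r) hν hB (by omega)
      fun m => (hu m).mono (le_mul_of_one_le_left hB hone)
    refine ⟨_, .first hh, fun k => ?_⟩
    obtain ⟨g, hg, hgf⟩ := hf k
    obtain ⟨g', hg', hgg'⟩ := hsim g hg
    exact ⟨g', hg', fun x => (hgf x).trans (hgg' x)⟩
  | L + 1, κ, f, ⟨μ, _, u, hu, hμ, hf⟩ => by
    obtain ⟨z, hz, huz⟩ := exists_isLeakyLayer hν hB hr hu
    choose v hv huv using huz
    obtain ⟨h, hh, hsim⟩ := exists_leaky_layer_of_posPart (r := r) (u := fun y m => v m y) hν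
      hB (by omega) hv
    refine ⟨_, .next hz hh, fun k => ?_⟩
    obtain ⟨g, hg, hgf⟩ := hf k
    obtain ⟨g', hg', hgg'⟩ := hsim g hg
    refine ⟨g', hg', fun x => ?_⟩
    rw [hgf, ← hgg', show u x = fun m => v m (z x) from funext fun m => huv m x]

theorem ReluNet.memDNN (hν : |ν| < 1) (hB : 0 ≤ B) {W L : ℕ} (hr : 2 * W ≤ r) (hL : 0 < L)
    {f : (Fin d → ℝ) → ℝ} (hf : ReluNet B W L fun x (_ : Unit) => f x) :
    memDNN ν d L r (1 / (1 - ν ^ 2) * B) f := by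
  obtain ⟨L, rfl⟩ := Nat.exists_eq_add_of_lt hL
  rw [zero_add] at hf ⊢
  obtain ⟨z, hz, hfz⟩ := hf.exists_isLeakyLayer hν hB hr
  obtain ⟨g, hg, hfg⟩ := hfz ()
  rw [show f = fun x => g (z x) from funext hfg]
  exact hz.memDNN hg

end LeakyRelu

/-! ### Networks of scaled size -/

section ScaledReluNet

variable {ι κ μ : Type} [Fintype ι]

/-- Functions computed by a ReLU network of depth at most `C * T` and width at most `C * V` with
parameters at most `C`. The constant `C` absorbs everything that does not depend on the
approximation accuracy, whereas the width scale `V` and the depth scale `T` vary with it. -/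
def ScaledReluNet (C V T : ℕ) (f : (ι → ℝ) → κ → ℝ) : Prop :=
  ∃ L ≤ C * T, ReluNet (C : ℝ) (C * V) L f

namespace ScaledReluNet

variable {C C' C₁ C₂ C₃ C₄ V V' T T' : ℕ} {f : (ι → ℝ) → κ → ℝ}

theorem mono (hf : ScaledReluNet C V T f) (hC : C ≤ C') (hV : V ≤ V') (hT : T ≤ T') :
    ScaledReluNet C' V' T' f :=
  let ⟨L, hL, hf⟩ := hf
  ⟨L, hL.trans (Nat.mul_le_mul hC hT), hf.mono (mod_cast hC) (Nat.mul_le_mul hC hV)⟩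

theorem of_mul_scales {a b : ℕ} (ha : 0 < a) (hb : 0 < b)
    (hf : ScaledReluNet C (a * V) (b * T) f) : ScaledReluNet (C * a * b) V T f := by
  obtain ⟨L, hL, hf⟩ := hf
  have hC : C ≤ C * a * b :=
    (Nat.le_mul_of_pos_right C ha).trans (Nat.le_mul_of_pos_right _ hb)
  have hdepth : C * (b * T) ≤ C * a * b * T := by
    rw [← mul_assoc]
    gcongr
    exact Nat.le_mul_of_pos_right C ha
  have hwidth : C * (a * V) ≤ C * a * b * V := by
    rw [← mul_assoc]
    exact Nat.mul_le_mul_right V (Nat.le_mul_of_pos_right _ hb)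
  exact ⟨L, hL.trans hdepth, hf.mono (mod_cast hC) hwidth⟩

theorem of_affine {B : ℝ} (hf : ∀ k, BoundedAffine B fun x => f x k) :
    ScaledReluNet ⌈B⌉₊ V T f :=
  ⟨0, Nat.zero_le _, fun k => (hf k).mono (Nat.le_ceil B)⟩

theorem coord (e : κ → ι) : ScaledReluNet 1 V T fun (x : ι → ℝ) k => x (e k) := by
  simpa using of_affine (V := V) (T := T) fun k => BoundedAffine.coord (e k)

theorem reindex (hf : ScaledReluNet C V T f) (e : μ → κ) :
    ScaledReluNet C V T fun x m => f x (e m) :=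
  let ⟨L, hL, hf⟩ := hf
  ⟨L, hL, hf.reindex e⟩

theorem comp_posPart [Fintype μ] {h : (ι → ℝ) → μ → ℝ} {g : (μ → ℝ) → κ → ℝ} {B₁ B₂ : ℝ}
    (hh : ∀ m, BoundedAffine B₁ fun x => h x m) (hg : ∀ k, BoundedAffine B₂ fun y => g y k)
    (hμ : Fintype.card μ ≤ C * V) :
    ScaledReluNet (⌈B₁⌉₊ + ⌈B₂⌉₊ + C + 1) V 1 fun x => g (h x)⁺ := by
  refine ⟨1, by omega, μ, inferInstance, h, fun m => (hh m).mono ?_, by nlinarith,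
    fun k => ⟨_, (hg k).mono ?_, fun _ => rfl⟩⟩
  all_goals push_cast; linarith [Nat.le_ceil B₁, Nat.le_ceil B₂,
    Nat.cast_nonneg (α := ℝ) ⌈B₁⌉₊, Nat.cast_nonneg (α := ℝ) ⌈B₂⌉₊, Nat.cast_nonneg (α := ℝ) C]

theorem comp [Fintype κ] [NeZero T] {g : (κ → ℝ) → μ → ℝ} (hg : ScaledReluNet C₂ V T g)
    (hf : ScaledReluNet C₁ V T f) (hκ : 2 * Fintype.card κ ≤ C₃ * V) :
    ScaledReluNet (C₁ + C₂ + C₃ + 1) V T fun x => g (f x) := by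
  obtain ⟨L₁, hL₁, hf⟩ := hf
  obtain ⟨L₂, hL₂, hg⟩ := hg
  have hT : 1 ≤ T := NeZero.one_le
  have hf' : ReluNet ((C₁ + C₂ + C₃ + 1 : ℕ) : ℝ) ((C₁ + C₂ + C₃ + 1) * V) L₁ f :=
    hf.mono (mod_cast by omega) (Nat.mul_le_mul_right V (by omega))
  exact ⟨L₁ + 1 + L₂, by nlinarith, hf'.comp (hκ.trans (Nat.mul_le_mul_right V (by omega)))
    (hg.mono (mod_cast by omega) (Nat.mul_le_mul_right V (by omega)))⟩

theorem comp_coord [Fintype κ] [NeZero T] {g : (κ → ℝ) → μ → ℝ} (hg : ScaledReluNet C₂ V T g)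
    (e : κ → ι) (hκ : 2 * Fintype.card κ ≤ C₃ * V) :
    ScaledReluNet (1 + C₂ + C₃ + 1) V T fun (x : ι → ℝ) => g fun k => x (e k) :=
  hg.comp (coord e) hκ

theorem exists_reluNet_of_le [Fintype κ] (hf : ScaledReluNet C V T f)
    (hκ : 2 * Fintype.card κ ≤ C₃ * V) {L : ℕ} (hL : C * T ≤ L) :
    ReluNet ((C + C₃ + 1 : ℕ) : ℝ) ((C + C₃) * V) L f := by
  obtain ⟨L', hL', hf⟩ := hf
  exact (hf.mono (mod_cast by omega) (Nat.mul_le_mul_right V (by omega))).pad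
    (mod_cast by omega) (hκ.trans (Nat.mul_le_mul_right V (by omega))) (hL'.trans hL)

theorem sigma {I : Type} [Fintype I] {κ : I → Type} [∀ i, Fintype (κ i)]
    {f : (i : I) → (ι → ℝ) → κ i → ℝ} (hf : ∀ i, ScaledReluNet C V T (f i))
    (hκ : ∀ i, 2 * Fintype.card (κ i) ≤ C₃ * V) :
    ScaledReluNet ((Fintype.card I + 1) * (C + C₃ + 1)) V T
      fun x (s : Σ i, κ i) => f s.1 x s.2 := by
  have hnet := ReluNet.sigma fun i => (hf i).exists_reluNet_of_le (hκ i) le_rfl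
  refine ⟨C * T, Nat.mul_le_mul_right T (by nlinarith), hnet.mono ?_ ?_⟩
  · exact_mod_cast Nat.le_mul_of_pos_left _ (Nat.succ_pos _)
  · rw [Finset.sum_const, Finset.card_univ, smul_eq_mul, ← mul_assoc]
    exact Nat.mul_le_mul_right V (by nlinarith)

theorem pi [NeZero V] {I : Type} [Fintype I] {f : I → (ι → ℝ) → ℝ}
    (hf : ∀ i, ScaledReluNet C V T fun x (_ : Unit) => f i x) :
    ScaledReluNet ((Fintype.card I + 1) * (C + 3)) V T fun x i => f i x :=
  (sigma hf fun _ => Nat.le_mul_of_pos_right _ (NeZero.pos V)).reindex fun i => ⟨i, ()⟩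

theorem pair [NeZero V] {f g : (ι → ℝ) → ℝ}
    (hf : ScaledReluNet C₁ V T fun x (_ : Unit) => f x)
    (hg : ScaledReluNet C₂ V T fun x (_ : Unit) => g x) :
    ScaledReluNet (3 * (C₁ + C₂ + 3)) V T
      fun x => ![f x, g x] := by
  have h : ∀ i, ScaledReluNet (C₁ + C₂) V T fun x (_ : Unit) => ![f, g] i x :=
    Fin.forall_fin_two.2 ⟨hf.mono (by omega) le_rfl le_rfl, hg.mono (by omega) le_rfl le_rfl⟩
  have hnet := pi h
  rw [Fintype.card_fin] at hnet
  convert hnet using 2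
  funext i
  fin_cases i <;> rfl

theorem sum [Fintype κ] [Fintype μ] {g : (ι → ℝ) → μ → ℝ} (hf : ScaledReluNet C V T f)
    (hg : ScaledReluNet C V T g) (hκ : 2 * Fintype.card κ ≤ C₃ * V)
    (hμ : 2 * Fintype.card μ ≤ C₃ * V) :
    ScaledReluNet ((2 + 1) * (C + C₃ + 1)) V T fun x => Sum.elim (f x) (g x) := by
  let _ : ∀ b, Fintype (cond b κ μ) := fun | true => ‹Fintype κ› | false => ‹Fintype μ›
  have h := (sigma (I := Bool) (κ := fun b => cond b κ μ) (C₃ := C₃)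
    (f := fun b x => match b with | true => f x | false => g x)
    (fun | true => hf | false => hg) (fun | true => hκ | false => hμ)).reindex
    (Sum.elim (fun k => ⟨true, k⟩) fun m => ⟨false, m⟩ : κ ⊕ μ → Σ b, cond b κ μ)
  rw [Fintype.card_bool] at h
  convert h using 2
  funext s
  rcases s with _ | _ <;> rfl

theorem comp_sum_elim [Fintype μ] [NeZero T] {g : (ι ⊕ μ → ℝ) → κ → ℝ} {h : (ι → ℝ) → μ → ℝ}
    (hg : ScaledReluNet C₂ V T g) (hh : ScaledReluNet C₁ V T h)
    (hC : 2 * (Fintype.card ι + Fintype.card μ) ≤ C₃ * V) :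
    ScaledReluNet ((2 + 1) * (1 + C₁ + C₃ + 1) + C₂ + C₃ + 1) V T
      fun x => g (Sum.elim x (h x)) :=
  hg.comp (sum ((coord id).mono (Nat.le_add_right 1 C₁) le_rfl le_rfl)
    (hh.mono (Nat.le_add_left C₁ 1) le_rfl le_rfl) (by omega) (by omega))
    (by rwa [Fintype.card_sum])

end ScaledReluNet

theorem ScaledReluNet.memDNN {ν : ℝ} (hν : |ν| < 1) {d r C V T L : ℕ} [NeZero V]
    {f : (Fin d → ℝ) → ℝ} (hf : ScaledReluNet C V T fun x (_ : Unit) => f x) (hL : C * T ≤ L)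
    (hL₀ : 0 < L) (hr : 2 * (C + 2) * V ≤ r) :
    _root_.memDNN ν d L r (1 / (1 - ν ^ 2) * ((C : ℝ) + 3)) f := by
  rw [show (C : ℝ) + 3 = ((C + 2 + 1 : ℕ) : ℝ) by norm_num [add_assoc]]
  exact (hf.exists_reluNet_of_le (Nat.le_mul_of_pos_right _ (NeZero.pos V)) hL).memDNN hν
    (Nat.cast_nonneg _) (by rwa [← mul_assoc]) hL₀

theorem scaledReluNet_two_pow_mul [Fintype κ] {C V : ℕ}
    (hκ : 2 * Fintype.card κ ≤ C * V) (e : ℕ) :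
    ScaledReluNet (C + 2) V (e + 1) fun (y : κ → ℝ) k => 2 ^ e * y k := by
  refine ⟨e, by nlinarith, ?_⟩
  induction e with
  | zero => exact fun k => by simpa using (BoundedAffine.coord k).mono (by norm_cast; omega)
  | succ e ih =>
    have hstep := ih.comp_affine (g := fun y k => 2 * y k)
      (fun k => ((BoundedAffine.coord k).const_mul 2).mono (by norm_num))
      (hκ.trans (Nat.mul_le_mul_right V (by omega)))
    simpa only [pow_succ', mul_assoc] using hstep

/-- Truncation to the unit interval. -/
def clip01 (z : ℝ) : ℝ := z⁺ - (z - 1)⁺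

theorem clip01_of_nonpos {z : ℝ} (hz : z ≤ 0) : clip01 z = 0 := by
  rw [clip01, posPart_eq_zero.2 hz, posPart_eq_zero.2 (by linarith), sub_zero]

theorem clip01_of_one_le {z : ℝ} (hz : 1 ≤ z) : clip01 z = 1 := by
  rw [clip01, posPart_eq_self.2 (by linarith), posPart_eq_self.2 (sub_nonneg.2 hz),
    sub_sub_cancel]

theorem scaledReluNet_clip01 [Fintype κ] {C V : ℕ} (hκ : 2 * Fintype.card κ ≤ C * V) :
    ScaledReluNet (⌈(1 : ℝ) + 1⌉₊ + ⌈(1 : ℝ) + 1⌉₊ + C + 1) V 1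
      fun (y : κ → ℝ) k => clip01 (y k) := by
  have hpre : ∀ s, BoundedAffine (1 + 1)
      fun y : κ → ℝ => Sum.elim (fun k => y k) (fun k => y k - 1) s := by
    rintro (k | k)
    · exact (BoundedAffine.coord k).mono (by norm_num)
    · simpa using (BoundedAffine.coord k).sub (.const 1)
  exact ScaledReluNet.comp_posPart (g := fun z k => z (Sum.inl k) - z (Sum.inr k)) hpre
    (fun k => (BoundedAffine.coord _).sub (.coord _)) (by rwa [Fintype.card_sum, ← two_mul])

end ScaledReluNet

/-! ### Maxima, minima and medians -/

section Median

variable {ι : Type} [Fintype ι]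

/-- Real functions computed exactly by some fixed ReLU network. -/
def ReluRealizable (f : (ι → ℝ) → ℝ) : Prop :=
  ∃ C, ScaledReluNet C 1 1 fun x (_ : Unit) => f x

namespace ReluRealizable

variable {α : Type} {f g : (ι → ℝ) → ℝ}

theorem of_affine {B : ℝ} (hf : BoundedAffine B f) : ReluRealizable f :=
  ⟨_, .of_affine fun _ => hf⟩

theorem coord (i : ι) : ReluRealizable fun x => x i :=
  of_affine (.coord i)

theorem neg (hf : ReluRealizable f) : ReluRealizable fun x => -f x :=
  let ⟨_, hf⟩ := hf
  ⟨_, (ScaledReluNet.of_affine fun k => (BoundedAffine.coord k).neg).comp hf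
    (Nat.le_mul_of_pos_right _ one_pos)⟩

theorem max (hf : ReluRealizable f) (hg : ReluRealizable g) :
    ReluRealizable fun x => max (f x) (g x) := by
  obtain ⟨C₁, hf⟩ := hf
  obtain ⟨C₂, hg⟩ := hg
  have hpre : ∀ m, BoundedAffine (1 + 1)
      fun y : Fin 2 → ℝ => (![y 0 - y 1, y 1, -y 1] : Fin 3 → ℝ) m := by
    intro m
    fin_cases m
    exacts [(BoundedAffine.coord 0).sub (.coord 1), (BoundedAffine.coord 1).mono (by norm_num),
      (BoundedAffine.coord 1).neg.mono (by norm_num)]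
  have hval (a b : ℝ) : Max.max a b = (a - b)⁺ + b⁺ - (-b)⁺ := by
    rw [posPart_neg, add_sub_assoc, posPart_sub_negPart, posPart_def, max_add, sub_add_cancel,
      zero_add]
  have hmax := ScaledReluNet.comp_posPart (C := 3) (V := 1)
    (g := fun (z : Fin 3 → ℝ) (_ : Unit) => z 0 + z 1 - z 2) hpre
    (fun _ => ((BoundedAffine.coord 0).add (.coord 1)).sub (.coord 2)) (by simp)
  simp only [hval]
  exact ⟨_, hmax.comp (hf.pair hg) (Nat.le_mul_of_pos_right _ one_pos)⟩

theorem abs (hf : ReluRealizable f) : ReluRealizable fun x => |f x| :=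
  hf.max hf.neg

theorem min (hf : ReluRealizable f) (hg : ReluRealizable g) :
    ReluRealizable fun x => min (f x) (g x) := by
  simpa only [max_neg_neg, neg_neg] using (hf.neg.max hg.neg).neg

theorem sup' {s : Finset α} (hs : s.Nonempty) {f : α → (ι → ℝ) → ℝ}
    (hf : ∀ a, ReluRealizable (f a)) : ReluRealizable fun x => s.sup' hs fun a => f a x := by
  induction hs using Finset.Nonempty.cons_induction with
  | singleton a => simpa using hf a
  | cons a s ha hs ih => simpa only [Finset.sup'_cons hs] using (hf a).max ih

theorem inf' {s : Finset α} (hs : s.Nonempty) {f : α → (ι → ℝ) → ℝ}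
    (hf : ∀ a, ReluRealizable (f a)) : ReluRealizable fun x => s.inf' hs fun a => f a x := by
  induction hs using Finset.Nonempty.cons_induction with
  | singleton a => simpa using hf a
  | cons a s ha hs ih => simpa only [Finset.inf'_cons hs] using (hf a).min ih

end ReluRealizable

/-- The subsets of `Fin (2 * d + 1)` that form a bare majority. -/
abbrev BareMajority (d : ℕ) : Type := {S : Finset (Fin (2 * d + 1)) // S.card = d + 1}

theorem BareMajority.nonempty {d : ℕ} (S : BareMajority d) : S.1.Nonempty := by
  rw [← Finset.card_pos, S.2]
  exact d.succ_pos

instance (d : ℕ) : Nonempty (BareMajority d) :=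
  let ⟨S, _, hS⟩ := Finset.exists_subset_card_eq (s := (Finset.univ : Finset (Fin (2 * d + 1))))
    (n := d + 1) (by rw [Finset.card_fin]; omega)
  ⟨⟨S, hS⟩⟩

/-- The median of `2 * d + 1` real numbers, written with maxima and minima only. -/
def median {d : ℕ} (v : Fin (2 * d + 1) → ℝ) : ℝ :=
  Finset.univ.sup' Finset.univ_nonempty fun S : BareMajority d => S.1.inf' S.nonempty v

theorem reluRealizable_median (d : ℕ) : ReluRealizable (median (d := d)) :=
  .sup' _ fun _ => .inf' _ .coord

theorem abs_median_sub_le {d : ℕ} {v : Fin (2 * d + 1) → ℝ} {y ε : ℝ}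
    {G : Finset (Fin (2 * d + 1))} (hG : d + 1 ≤ G.card) (hv : ∀ j ∈ G, |v j - y| ≤ ε) :
    |median v - y| ≤ ε := by
  rw [abs_sub_le_iff, sub_le_iff_le_add, sub_le_comm]
  constructor
  · refine Finset.sup'_le _ _ fun S _ => ?_
    obtain ⟨j, hjS, hjG⟩ : ∃ j ∈ S.1, j ∈ G := by
      by_contra! hdisj
      have hcard := (Finset.card_union_of_disjoint (Finset.disjoint_left.2 hdisj)).symm.trans_le
        (Finset.card_le_univ _)
      rw [Fintype.card_fin, S.2] at hcard
      omega
    exact (Finset.inf'_le v hjS).trans (by linarith [(abs_le.1 (hv j hjG)).2])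
  · obtain ⟨S, hSG, hS⟩ := Finset.exists_subset_card_eq hG
    refine le_trans ?_ (Finset.le_sup' (fun S : BareMajority d => S.1.inf' S.nonempty v)
      (Finset.mem_univ ⟨S, hS⟩))
    exact Finset.le_inf' _ _ fun j hj => by linarith [(abs_le.1 (hv j (hSG hj))).1]

end Median

/-! ### Squaring, multiplication and polynomials -/

section Polynomial

variable {ι : Type} [Fintype ι]

/-- The state of the squaring network after `k` layers: the `k`-th iterate of the tent map at `t`,
the same shifted by `1 / 2`, and the current approximation of `t ^ 2`. -/
def sqNet : ℕ → ℝ → Fin 3 → ℝ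
  | 0, t => ![t, t - 1 / 2, t]
  | k + 1, t =>
    ![2 * (sqNet k t 0)⁺ - 4 * (sqNet k t 1)⁺, 2 * (sqNet k t 0)⁺ - 4 * (sqNet k t 1)⁺ - 1 / 2,
      (sqNet k t 2)⁺ - (1 / 4 ^ (k + 1)) * (2 * (sqNet k t 0)⁺ - 4 * (sqNet k t 1)⁺)]

theorem reluNet_sqNet (i : ι) (k : ℕ) : ReluNet 8 3 k fun x : ι → ℝ => sqNet k (x i) := by
  induction k with
  | zero =>
    intro m
    fin_cases m
    exacts [(BoundedAffine.coord i).mono (by norm_num),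
      ((BoundedAffine.coord i).sub (.const (1 / 2))).mono (by norm_num [abs_div]),
      (BoundedAffine.coord i).mono (by norm_num)]
  | succ k ih =>
    refine ⟨Fin 3, inferInstance, _, ih, by simp, fun m => ?_⟩
    have htent : BoundedAffine (6 : ℝ) fun y : Fin 3 → ℝ => 2 * y 0 - 4 * y 1 :=
      (((BoundedAffine.coord 0).const_mul 2).sub ((BoundedAffine.coord 1).const_mul 4)).mono
        (by norm_num)
    have hscale : |1 / (4 : ℝ) ^ (k + 1)| ≤ 1 := by
      rw [abs_of_pos (by positivity)]
      exact div_le_one_of_le₀ (one_le_pow₀ (by norm_num)) (by positivity)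
    fin_cases m
    exacts [⟨_, htent.mono (by norm_num), fun _ => rfl⟩,
      ⟨_, (htent.sub (.const (1 / 2))).mono (by norm_num [abs_div]), fun _ => rfl⟩,
      ⟨_, ((BoundedAffine.coord 2).sub (htent.const_mul (1 / 4 ^ (k + 1)))).mono (by linarith),
        fun _ => rfl⟩]

theorem sqNet_invariant {t : ℝ} (h₀ : 0 ≤ t) (h₁ : t ≤ 1) (k : ℕ) :
    0 ≤ sqNet k t 0 ∧ sqNet k t 0 ≤ 1 ∧ sqNet k t 1 = sqNet k t 0 - 1 / 2 ∧
      sqNet k t 2 = t ^ 2 + (sqNet k t 0 - sqNet k t 0 ^ 2) / 4 ^ k := by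
  induction k with
  | zero => simp [sqNet, h₀, h₁]
  | succ k ih =>
    obtain ⟨hs₀, hs₁, hshift, hacc⟩ := ih
    have hacc₀ : 0 ≤ sqNet k t 2 := by
      rw [hacc]
      exact add_nonneg (sq_nonneg t) (div_nonneg (by nlinarith) (by positivity))
    simp only [sqNet, Matrix.cons_val_zero, Matrix.cons_val_one, Matrix.cons_val,
      posPart_eq_self.2 hs₀, posPart_eq_self.2 hacc₀, hshift]
    rw [hacc]
    generalize sqNet k t 0 = s at hs₀ hs₁
    rcases le_total s (1 / 2) with hs | hs
    · rw [posPart_eq_zero.2 (by linarith)]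
      refine ⟨by linarith, by linarith, trivial, ?_⟩
      rw [pow_succ]; field_simp; ring
    · rw [posPart_eq_self.2 (by linarith)]
      refine ⟨by linarith, by linarith, trivial, ?_⟩
      rw [pow_succ]; field_simp; ring

theorem abs_sqNet_abs_sub_sq_le {t : ℝ} (ht : |t| ≤ 1) (k : ℕ) :
    |sqNet k |t| 2 - t ^ 2| ≤ 1 / 4 ^ k := by
  obtain ⟨hs₀, hs₁, -, hacc⟩ := sqNet_invariant (abs_nonneg t) ht k
  rw [hacc, sq_abs, add_sub_cancel_left,
    abs_of_nonneg (div_nonneg (by nlinarith) (by positivity))]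
  gcongr
  nlinarith [sq_nonneg (sqNet k |t| 0)]

theorem scaledReluNet_sqNet_abs {B : ℝ} {f : (ι → ℝ) → ℝ} (hf : BoundedAffine B f) :
    ∃ C, ∀ k : ℕ, ScaledReluNet C 1 (k + 1) fun x (_ : Unit) => sqNet k |f x| 2 := by
  obtain ⟨C, hC⟩ := (ReluRealizable.of_affine hf).abs
  have hsq (k) : ScaledReluNet 8 1 (k + 1) fun (y : Unit → ℝ) (_ : Unit) => sqNet k (y ()) 2 :=
    ⟨k, by omega, ((reluNet_sqNet () k).mono (by norm_num) (by norm_num)).reindex fun _ => 2⟩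
  exact ⟨_, fun k => (hsq k).comp (hC.mono le_rfl le_rfl (by omega))
    (Nat.le_mul_of_pos_right _ one_pos)⟩

/-- Functions that on the sup-norm ball of radius `R` are approximated with error `O(4⁻ᵏ)` by
ReLU networks of bounded width, bounded parameters and depth `O(k)`. -/
def GeometricallyApproximable (R : ℝ) (f : (ι → ℝ) → ℝ) : Prop :=
  ∃ (C : ℕ) (D : ℝ), ∀ k : ℕ, ∃ φ : (ι → ℝ) → ℝ,
    ScaledReluNet C 1 (k + 1) (fun x (_ : Unit) => φ x) ∧ ∀ x, ‖x‖ ≤ R → |φ x - f x| ≤ D / 4 ^ k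

namespace GeometricallyApproximable

variable {R : ℝ} {f g : (ι → ℝ) → ℝ}

theorem of_affine {B : ℝ} (hf : BoundedAffine B f) : GeometricallyApproximable R f :=
  ⟨_, 0, fun _ => ⟨f, .of_affine fun _ => hf, fun x _ => by simp⟩⟩

theorem add (hf : GeometricallyApproximable R f) (hg : GeometricallyApproximable R g) :
    GeometricallyApproximable R fun x => f x + g x := by
  obtain ⟨C₁, D₁, hf⟩ := hf
  obtain ⟨C₂, D₂, hg⟩ := hg
  choose φ hφ hφf using hf
  choose ψ hψ hψg using hg
  have hnet (k : ℕ) := (ScaledReluNet.of_affine (κ := Unit) fun _ =>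
    (BoundedAffine.coord (0 : Fin 2)).add (.coord 1)).comp ((hφ k).pair (hψ k))
    (Nat.le_mul_of_pos_right _ one_pos)
  refine ⟨_, D₁ + D₂, fun k => ⟨_, hnet k, fun x hx => ?_⟩⟩
  rw [add_div]
  simpa only [Matrix.cons_val_zero, Matrix.cons_val_one, add_sub_add_comm] using
    (abs_add_le _ _).trans (add_le_add (hφf k x hx) (hψg k x hx))

/-- Multiplication by polarization: `x y = R² (((x + y) / 2R)² - ((x - y) / 2R)²)`. -/
theorem mul_coord (hR : 0 < R) :
    GeometricallyApproximable R fun x : Fin 2 → ℝ => x 0 * x 1 := by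
  obtain ⟨C₁, h₁⟩ := scaledReluNet_sqNet_abs
    (((BoundedAffine.coord (0 : Fin 2)).add (.coord 1)).const_mul (1 / (2 * R)))
  obtain ⟨C₂, h₂⟩ := scaledReluNet_sqNet_abs
    (((BoundedAffine.coord (0 : Fin 2)).sub (.coord 1)).const_mul (1 / (2 * R)))
  have hnet (k : ℕ) := (ScaledReluNet.of_affine (κ := Unit) fun _ =>
    ((BoundedAffine.coord (0 : Fin 2)).sub (.coord 1)).const_mul (R ^ 2)).comp
    ((h₁ k).pair (h₂ k)) (Nat.le_mul_of_pos_right _ one_pos)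
  refine ⟨_, 2 * R ^ 2, fun k => ⟨_, hnet k, fun x hx => ?_⟩⟩
  have h0 := abs_le.1 ((norm_le_pi_norm x 0).trans hx)
  have h1 := abs_le.1 ((norm_le_pi_norm x 1).trans hx)
  have hadd : |1 / (2 * R) * (x 0 + x 1)| ≤ 1 := by
    rw [one_div_mul_eq_div, abs_div, abs_of_pos (by positivity : 0 < 2 * R),
      div_le_one (by positivity), abs_le]
    constructor <;> linarith
  have hsub : |1 / (2 * R) * (x 0 - x 1)| ≤ 1 := by
    rw [one_div_mul_eq_div, abs_div, abs_of_pos (by positivity : 0 < 2 * R),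
      div_le_one (by positivity), abs_le]
    constructor <;> linarith
  have hpol : x 0 * x 1 =
      R ^ 2 * ((1 / (2 * R) * (x 0 + x 1)) ^ 2 - (1 / (2 * R) * (x 0 - x 1)) ^ 2) := by
    field_simp
    ring
  have hsqa := abs_le.1 (abs_sqNet_abs_sub_sq_le hadd k)
  have hsqs := abs_le.1 (abs_sqNet_abs_sub_sq_le hsub k)
  simp only [Matrix.cons_val_zero, Matrix.cons_val_one]
  rw [hpol, ← mul_sub, abs_mul, abs_of_pos (by positivity : 0 < R ^ 2), mul_comm 2 (R ^ 2),
    mul_div_assoc]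
  refine mul_le_mul_of_nonneg_left (abs_le.2 ?_) (sq_nonneg R)
  rw [← mul_one_div 2]
  constructor <;> linarith

theorem mul (hf : GeometricallyApproximable R f) (hg : GeometricallyApproximable R g)
    (hfc : Continuous f) (hgc : Continuous g) :
    GeometricallyApproximable R fun x => f x * g x := by
  obtain ⟨M, hM⟩ := (isCompact_closedBall (0 : ι → ℝ) R).exists_bound_of_continuousOn
    (hfc.prodMk hgc).continuousOn
  simp only [mem_closedBall_zero_iff, norm_prod_le_iff, Real.norm_eq_abs] at hM
  obtain ⟨C₁, D₁, hf⟩ := hf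
  obtain ⟨C₂, D₂, hg⟩ := hg
  obtain ⟨C₃, D₃, hmul⟩ := mul_coord (R := |M| + |D₁| + |D₂| + 1) (by positivity)
  choose φ hφ hφf using hf
  choose ψ hψ hψg using hg
  choose χ hχ hχm using hmul
  refine ⟨_, D₃ + (|M| + |D₁|) * |D₂| + |D₁| * |M|, fun k => ⟨_, (hχ k).comp
    ((hφ k).pair (hψ k)) (Nat.le_mul_of_pos_right _ one_pos), fun x hx => ?_⟩⟩
  have hdiv (D : ℝ) : D / 4 ^ k ≤ |D| / 4 ^ k ∧ |D| / 4 ^ k ≤ |D| :=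
    ⟨by gcongr; exact le_abs_self D, div_le_self (abs_nonneg D) (one_le_pow₀ (by norm_num))⟩
  have hfM := (hM x hx).1.trans (le_abs_self M)
  have hgM := (hM x hx).2.trans (le_abs_self M)
  have hφx := (hφf k x hx).trans (hdiv D₁).1
  have hψx := (hψg k x hx).trans (hdiv D₂).1
  have hφM : |φ k x| ≤ |M| + |D₁| := by
    linarith [abs_sub_abs_le_abs_sub (φ k x) (f x), (hdiv D₁).2]
  have hψM : |ψ k x| ≤ |M| + |D₂| := by
    linarith [abs_sub_abs_le_abs_sub (ψ k x) (g x), (hdiv D₂).2]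
  have hχx : |χ k ![φ k x, ψ k x] - φ k x * ψ k x| ≤ D₃ / 4 ^ k := by
    refine hχm k ![φ k x, ψ k x] ((pi_norm_le_iff_of_nonneg (by positivity)).2 ?_)
    rw [Fin.forall_fin_two]
    exact ⟨by simpa using hφM.trans (by linarith [abs_nonneg D₂]),
      by simpa using hψM.trans (by linarith [abs_nonneg D₁])⟩
  calc |χ k ![φ k x, ψ k x] - f x * g x|
      = |(χ k ![φ k x, ψ k x] - φ k x * ψ k x) + φ k x * (ψ k x - g x) +
          (φ k x - f x) * g x| := by ring_nf
    _ ≤ |χ k ![φ k x, ψ k x] - φ k x * ψ k x| + |φ k x * (ψ k x - g x)| + |(φ k x - f x) * g x| :=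
        abs_add_three _ _ _
    _ ≤ D₃ / 4 ^ k + (|M| + |D₁|) * (|D₂| / 4 ^ k) + |D₁| / 4 ^ k * |M| := by
        rw [abs_mul, abs_mul]
        gcongr
    _ = (D₃ + (|M| + |D₁|) * |D₂| + |D₁| * |M|) / 4 ^ k := by ring

theorem mvPolynomial_eval (p : MvPolynomial ι ℝ) :
    GeometricallyApproximable R fun x => MvPolynomial.eval x p := by
  induction p using MvPolynomial.induction_on with
  | C a => simpa only [MvPolynomial.eval_C] using of_affine (.const a)
  | add p q hp hq => simpa only [map_add] using hp.add hq
  | mul_X p i hp =>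
    simpa only [map_mul, MvPolynomial.eval_X] using
      hp.mul (of_affine (.coord i)) p.continuous_eval (continuous_apply i)

end GeometricallyApproximable

end Polynomial

/-! ### Lookup tables -/

section Lookup

/-- The continuous approximation of the indicator of `[t, ∞)` that is affine on `[t - η, t]`. -/
def ramp (η t y : ℝ) : ℝ := clip01 ((y - t) / η + 1)

theorem ramp_of_le {η t y : ℝ} (hη : 0 < η) (h : t ≤ y) : ramp η t y = 1 :=
  clip01_of_one_le (le_add_of_nonneg_left (div_nonneg (sub_nonneg.2 h) hη.le))

theorem ramp_of_add_le {η t y : ℝ} (hη : 0 < η) (h : y + η ≤ t) : ramp η t y = 0 := by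
  refine clip01_of_nonpos (le_of_eq_of_le (b := (y + η - t) / η) ?_ ?_)
  · field_simp
    ring
  · exact div_nonpos_of_nonpos_of_nonneg (sub_nonpos.2 h) hη.le

/-- `y` lies in the `m`-th cell of the grid of mesh `δ`, outside the strip of width `η` at the
right end of that cell, on which the ramps of slope `1 / η` are not constant. -/
def InnerCell (η δ : ℝ) (m : ℕ) (y : ℝ) : Prop :=
  m * δ ≤ y ∧ y + η ≤ (m + 1) * δ

namespace InnerCell

variable {η δ y : ℝ} {m : ℕ}

theorem ramp_eq (hη : 0 < η) (hδ : 0 ≤ δ) (hy : InnerCell η δ m y) (k : ℕ) :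
    ramp η (k * δ) y = if k ≤ m then 1 else 0 := by
  split_ifs with hk
  · exact ramp_of_le hη (hy.1.trans' (by gcongr))
  · refine ramp_of_add_le hη (hy.2.trans ?_)
    gcongr
    exact_mod_cast not_le.1 hk

variable {c s M : ℕ}

theorem coarse (hδ : 0 ≤ δ) (hs : s < M) (hy : InnerCell η δ (c * M + s) y) :
    InnerCell η (M * δ) c y := by
  have hs' : (s : ℝ) + 1 ≤ M := by exact_mod_cast hs
  refine ⟨hy.1.trans' ?_, hy.2.trans ?_⟩ <;> push_cast <;> rw [← mul_assoc] <;> gcongr <;>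
    linarith [Nat.cast_nonneg (α := ℝ) s]

theorem fine (hy : InnerCell η δ (c * M + s) y) : InnerCell η δ s (y - c * (M * δ)) := by
  obtain ⟨h₁, h₂⟩ := hy
  push_cast at h₁ h₂
  constructor <;> linarith

end InnerCell

theorem exists_scaledReluNet_ramp (B J : ℝ) (C : ℕ) : ∃ C' : ℕ, ∀ {ι κ : Type} [Fintype ι]
    [Fintype κ] {V : ℕ} {u : (ι → ℝ) → κ → ℝ} {t : κ → ℝ} (e : ℕ),
    (∀ k, BoundedAffine B fun x => u x k) → (∀ k, |t k| ≤ 1) → 2 * Fintype.card κ ≤ C * V →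
      ScaledReluNet C' V (e + 1) fun x k => ramp (1 / (J * 4 ^ e)) (t k) (u x k) := by
  refine ⟨(⌈|J| * (B + 1) + 1⌉₊ + (C + 2) * 2 + C + 1) +
    (⌈(1 : ℝ) + 1⌉₊ + ⌈(1 : ℝ) + 1⌉₊ + C + 1) + C + 1, fun {ι κ _ _ V u t} e hu ht hκ => ?_⟩
  have hpre : ∀ k, BoundedAffine (|J| * (B + 1) + 1)
      fun x => J * (u x k - t k) + 1 / 4 ^ e := fun k => by
    refine ((((hu k).sub ((BoundedAffine.const (t k)).mono (ht k))).const_mul J).add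
      (.const (1 / 4 ^ e))).mono (add_le_add_right ?_ _)
    rw [abs_of_pos (by positivity)]
    exact div_le_one_of_le₀ (one_le_pow₀ (by norm_num)) (by positivity)
  have hscale : ScaledReluNet ((C + 2) * 2) V (e + 1)
      fun (y : κ → ℝ) k => 2 ^ (2 * e) * y k := by
    obtain ⟨L, hL, hnet⟩ := scaledReluNet_two_pow_mul hκ (2 * e)
    exact ⟨L, by nlinarith, hnet.mono (by norm_cast; omega) (by nlinarith)⟩
  convert ((scaledReluNet_clip01 hκ).mono le_rfl le_rfl (by omega)).comp
    (hscale.comp (.of_affine hpre) hκ) hκ using 5 with x k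
  rw [ramp, pow_mul, (by norm_num : (2 : ℝ) ^ 2 = 4)]
  field_simp

section Retrieval

variable {Q α β : Type} [Fintype α] [Fintype β]

/-- Retrieves the table entries `a q c s` from the indicator vectors of `c` and `s`; `B` bounds the
entries, so that all but one of the summands over `s` are cut off by the positive part. -/
def retrieve (B : ℝ) (a : Q → α → β → ℝ) (z : α ⊕ β → ℝ) (q : Q) : ℝ :=
  (∑ s, ((∑ c, (a q c s + B) * z (Sum.inl c)) + 2 * B * z (Sum.inr s) - 2 * B)⁺) - B

variable {B : ℝ} {a : Q → α → β → ℝ}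

theorem scaledReluNet_retrieve [Fintype Q] {C V : ℕ} (hB : 0 ≤ B) (ha : ∀ q c s, |a q c s| ≤ B)
    (hcard : Fintype.card (Q × β) ≤ C * V) :
    ScaledReluNet (⌈2 * B + |2 * B| * 1 + |2 * B|⌉₊ + ⌈1 + |B|⌉₊ + C + 1) V 1
      (retrieve B a) := by
  have hentry : ∀ q c s, |a q c s + B| ≤ 2 * B := fun q c s => by
    linarith [abs_add_le (a q c s) B, ha q c s, abs_of_nonneg hB]
  refine ScaledReluNet.comp_posPart (μ := Q × β)
    (h := fun z p => (∑ c, (a p.1 c p.2 + B) * z (Sum.inl c)) + 2 * B * z (Sum.inr p.2) - 2 * B)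
    (g := fun y q => (∑ s, y (q, s)) - B) (fun p => ?_) (fun q => ?_) hcard
  · exact ((BoundedAffine.linear (by positivity) (fun c => hentry p.1 c p.2)
      Sum.inl_injective).add ((BoundedAffine.coord _).const_mul _)).sub (.const _)
  · exact (BoundedAffine.sum_coord (Prod.mk_right_injective q)).sub (.const _)

theorem retrieve_indicator [DecidableEq α] [DecidableEq β] (ha : ∀ q c s, |a q c s| ≤ B) (c : α)
    (s : β) (q : Q) :
    retrieve B a (Sum.elim (fun c' => if c' = c then 1 else 0) fun s' => if s' = s then 1 else 0)
      q = a q c s := by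
  have hpos : ∀ s', (a q c s' + B + (if s' = s then 2 * B else 0) - 2 * B)⁺ =
      if s' = s then a q c s' + B else 0 := by
    intro s'
    have hentry := abs_le.1 (ha q c s')
    split_ifs
    · rw [posPart_eq_self.2 (by linarith)]
      ring
    · exact posPart_eq_zero.2 (by linarith)
  simp [retrieve, hpos]

end Retrieval

section OneHot

variable {d M : ℕ}

/-- The thermometer codes of the entries of `c`: a run of ones up to position `c i`, then zeros. -/
def thermometer (c : Fin d → Fin M) (p : Fin d × Fin (M + 1)) : ℝ :=
  if (p.2 : ℕ) ≤ c p.1 then 1 else 0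

theorem sum_thermometer (c : Fin d → Fin M) (i : Fin d) :
    ∑ k, thermometer c (i, k) = c i + 1 := by
  have hIic : (Finset.univ.filter fun k : Fin (M + 1) => (k : ℕ) ≤ c i) =
      Finset.Iic (c i).castSucc := by
    ext k
    simp [Fin.le_iff_val_le_val]
  simp [thermometer, hIic]

/-- Converts the thermometer codes of `c` into the indicator vector of `c`. -/
def oneHot (w : Fin d × Fin (M + 1) → ℝ) (c : Fin d → Fin M) : ℝ :=
  ((∑ i, w (i, (c i).castSucc)) - (∑ i, w (i, (c i).succ)) - ((d : ℝ) - 1))⁺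

theorem scaledReluNet_oneHot :
    ScaledReluNet (⌈1 + 1 + |(d : ℝ) - 1|⌉₊ + ⌈(1 : ℝ)⌉₊ + 1 + 1) (M ^ d) 1
      (oneHot : (Fin d × Fin (M + 1) → ℝ) → (Fin d → Fin M) → ℝ) :=
  .comp_posPart (g := id)
    (fun _ => ((BoundedAffine.sum_coord fun _ _ h => (Prod.ext_iff.1 h).1).sub
      (.sum_coord fun _ _ h => (Prod.ext_iff.1 h).1)).sub (.const _))
    (fun _ => .coord _) (by simp)

theorem oneHot_thermometer (c c' : Fin d → Fin M) :
    oneHot (thermometer c) c' = if c' = c then 1 else 0 := by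
  have hdiff : ∀ i, thermometer c (i, (c' i).castSucc) - thermometer c (i, (c' i).succ) =
      if c' i = c i then 1 else 0 := by
    intro i
    simp only [thermometer, Fin.val_castSucc, Fin.val_succ, Fin.ext_iff]
    split_ifs <;> first | omega | norm_num
  rw [oneHot, ← Finset.sum_sub_distrib, Finset.sum_congr rfl fun i _ => hdiff i,
    Finset.sum_boole]
  split_ifs with h
  · simp [h]
  · obtain ⟨i, hi⟩ := Function.ne_iff.1 h
    have hlt := Finset.card_lt_univ_of_notMem (x := i)
      (s := Finset.univ.filter fun i => c' i = c i) (by simpa using hi)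
    have hlt' : ((Finset.univ.filter fun i => c' i = c i).card : ℝ) + 1 ≤ d := by
      exact_mod_cast hlt.trans_eq (Fintype.card_fin d)
    exact posPart_eq_zero.2 (by linarith)

end OneHot

section Grid

variable {d M : ℕ}

/-- The approximate thermometer codes of the positions of the points `τ i` in the grid of mesh `δ`,
computed with ramps of slope `1 / η`. -/
def gridCode (η δ : ℝ) (τ : Fin d → ℝ) (p : Fin d × Fin (M + 1)) : ℝ :=
  ramp η ((p.2 : ℕ) * δ) (τ p.1)

theorem gridCode_eq_thermometer {η δ : ℝ} (hη : 0 < η) (hδ : 0 ≤ δ) {τ : Fin d → ℝ}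
    {c : Fin d → Fin M} (hτ : ∀ i, InnerCell η δ (c i) (τ i)) :
    gridCode η δ τ = thermometer c :=
  funext fun p => (hτ p.1).ramp_eq hη hδ p.2

/-- The position of `τ` within its cell of the coarse grid, of mesh `M * δ`. -/
def coarseRemainder (M : ℕ) (η δ : ℝ) (τ : Fin d → ℝ) (i : Fin d) : ℝ :=
  τ i - M * δ * ((∑ k, gridCode (M := M) η (M * δ) τ (i, k)) - 1)

theorem coarseRemainder_eq {η δ : ℝ} (hη : 0 < η) (hδ : 0 ≤ δ) {τ : Fin d → ℝ}
    {c : Fin d → Fin M} (hτ : ∀ i, InnerCell η (M * δ) (c i) (τ i)) (i : Fin d) :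
    coarseRemainder M η δ τ i = τ i - c i * (M * δ) := by
  rw [coarseRemainder, gridCode_eq_thermometer hη (by positivity) hτ, sum_thermometer,
    add_sub_cancel_right, mul_comm (c i : ℝ)]

theorem exists_scaledReluNet_gridCode (d : ℕ) (J : ℝ) (C : ℕ) : ∃ C' : ℕ, ∀ {M V : ℕ} {δ : ℝ}
    (e : ℕ), 0 ≤ δ → M * δ ≤ 1 → 2 * (d * (M + 1)) ≤ C * V → ScaledReluNet C' V (e + 1)
      (gridCode (1 / (J * 4 ^ e)) δ : (Fin d → ℝ) → Fin d × Fin (M + 1) → ℝ) := by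
  obtain ⟨C', hramp⟩ := exists_scaledReluNet_ramp 1 J C
  refine ⟨C', fun {M V δ} e hδ hMδ hV => hramp (u := fun τ p => τ p.1)
    (t := fun p : Fin d × Fin (M + 1) => (p.2 : ℕ) * δ) e (fun p => .coord p.1) (fun p => ?_)
    (by simpa using hV)⟩
  have hp : ((p.2 : ℕ) : ℝ) ≤ M := by exact_mod_cast p.2.is_le
  rw [abs_of_nonneg (by positivity)]
  exact hMδ.trans' (by gcongr)

theorem exists_scaledReluNet_coarseRemainder (d : ℕ) (J : ℝ) (C : ℕ) : ∃ C' : ℕ,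
    ∀ {M V : ℕ} {δ : ℝ} (e : ℕ), 0 ≤ δ → M * (M * δ) ≤ 1 → 2 * (d * (M + 1)) ≤ C * V →
      ScaledReluNet C' V (e + 1) (coarseRemainder (d := d) M (1 / (J * 4 ^ e)) δ) := by
  obtain ⟨C', hcode⟩ := exists_scaledReluNet_gridCode d J C
  have hnet {M V : ℕ} {δ : ℝ} (e : ℕ) (hδ : 0 ≤ δ) (hMδ : M * (M * δ) ≤ 1)
      (hV : 2 * (d * (M + 1)) ≤ C * V) := by
    have hcard : 2 * Fintype.card (Fin d) ≤ C * V := by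
      rw [Fintype.card_fin]
      nlinarith
    have hpair := ((ScaledReluNet.coord id).mono (Nat.le_add_left 1 C') le_rfl le_rfl).sum
      ((hcode e (by positivity) hMδ hV).mono (Nat.le_add_right C' 1) le_rfl le_rfl) hcard
      (by simpa using hV)
    have hout : ∀ i : Fin d, BoundedAffine (1 + 1 * (1 + 1))
        fun z : Fin d ⊕ Fin d × Fin (M + 1) → ℝ =>
          z (Sum.inl i) - M * δ * ((∑ k, z (Sum.inr (i, k))) - 1) := fun i => by
      have hsum := ((BoundedAffine.sum_coord ((Sum.inr_injective (α := Fin d)).comp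
        (Prod.mk_right_injective (β := Fin (M + 1)) i))).sub (.const 1)).const_mul (M * δ)
      refine (BoundedAffine.coord _).sub (hsum.mono ?_)
      have hmesh : M * δ ≤ 1 := by
        rcases M.eq_zero_or_pos with rfl | hM
        · simp
        · exact hMδ.trans' (le_mul_of_one_le_left (by positivity) (by exact_mod_cast hM))
      rw [abs_one, abs_of_nonneg (by positivity)]
      gcongr
    exact (ScaledReluNet.of_affine hout).comp hpair (C₃ := 2 * C) (by
      simp only [Fintype.card_sum, Fintype.card_prod, Fintype.card_fin] at hcard ⊢
      nlinarith)
  exact ⟨_, hnet⟩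

theorem natCast_two_pow_mul_self (e : ℕ) : ((2 ^ e : ℕ) : ℝ) * (2 ^ e : ℕ) = 4 ^ e := by
  push_cast
  rw [← mul_pow]
  norm_num

/-- The indicator vectors of the coarse and of the fine position of `τ` in the grid. -/
def gridIndicators (M : ℕ) (η δ : ℝ) (τ : Fin d → ℝ) :
    (Fin d → Fin M) ⊕ (Fin d → Fin M) → ℝ :=
  Sum.elim (oneHot (gridCode η (M * δ) τ)) (oneHot (gridCode η δ (coarseRemainder M η δ τ)))

theorem gridIndicators_eq {η δ : ℝ} (hη : 0 < η) (hδ : 0 ≤ δ) {τ : Fin d → ℝ}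
    {c s : Fin d → Fin M} (hτ : ∀ i, InnerCell η δ (c i * M + s i) (τ i)) :
    gridIndicators M η δ τ = Sum.elim (fun c' => if c' = c then 1 else 0)
      (fun s' => if s' = s then 1 else 0) := by
  have hcoarse : ∀ i, InnerCell η (M * δ) (c i) (τ i) := fun i => (hτ i).coarse hδ (s i).is_lt
  have hfine : ∀ i, InnerCell η δ (s i) (coarseRemainder M η δ τ i) := fun i => by
    rw [coarseRemainder_eq hη hδ hcoarse]
    exact (hτ i).fine
  rw [gridIndicators, gridCode_eq_thermometer hη (by positivity) hcoarse,
    gridCode_eq_thermometer hη hδ hfine]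
  congr 1 <;> exact funext (oneHot_thermometer _)

theorem exists_scaledReluNet_gridIndicators (hd : 0 < d) (J : ℝ) : ∃ C : ℕ, ∀ e : ℕ,
    ScaledReluNet C ((2 ^ e) ^ d) (e + 1)
      (gridIndicators (d := d) (2 ^ e) (1 / (J * 4 ^ e)) (1 / 4 ^ e)) := by
  obtain ⟨C₁, hcode⟩ := exists_scaledReluNet_gridCode d J (4 * d)
  obtain ⟨C₂, hrem⟩ := exists_scaledReluNet_coarseRemainder d J (4 * d)
  have hnet (e : ℕ) := by
    have hM : 2 ^ e ≤ (2 ^ e) ^ d := Nat.le_self_pow hd.ne' _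
    have hM₁ : 1 ≤ 2 ^ e := Nat.one_le_two_pow
    have hcodes : 2 * (d * (2 ^ e + 1)) ≤ 4 * d * (2 ^ e) ^ d := by nlinarith
    have hind : 2 * Fintype.card (Fin d → Fin (2 ^ e)) ≤ 2 * (2 ^ e) ^ d := by simp
    have hmesh : ((2 ^ e : ℕ) : ℝ) * ((2 ^ e : ℕ) * (1 / 4 ^ e)) = 1 := by
      rw [← mul_assoc, natCast_two_pow_mul_self, mul_one_div_cancel (by positivity)]
    have hmesh' : ((2 ^ e : ℕ) : ℝ) * (1 / 4 ^ e) ≤ 1 :=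
      hmesh.le.trans' (le_mul_of_one_le_left (by positivity) (by exact_mod_cast hM₁))
    have honeHot := (scaledReluNet_oneHot (d := d) (M := 2 ^ e)).mono le_rfl le_rfl
      (Nat.le_add_left 1 e)
    have hcard : 2 * Fintype.card (Fin d × Fin (2 ^ e + 1)) ≤ 4 * d * (2 ^ e) ^ d := by
      simpa using hcodes
    have hcoarse := honeHot.comp (hcode e (by positivity) hmesh.le hcodes) hcard
    have hfine := honeHot.comp ((hcode e (by positivity) hmesh' hcodes).comp
      (hrem e (by positivity) hmesh.le hcodes) (C₃ := 4 * d) (by simp; nlinarith)) hcard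
    exact (hcoarse.mono (by omega) le_rfl le_rfl).sum (hfine.mono le_rfl le_rfl le_rfl) hind hind
  exact ⟨_, hnet⟩

end Grid

/-- A table with `4 ^ (e * d)` cells is stored in a network of width `O(2 ^ (e * d))`: the position
of a cell is resolved in two steps, along a coarse and a fine grid with `2 ^ e` cells per axis. -/
theorem exists_scaledReluNet_lookup {d : ℕ} (hd : 0 < d) {J : ℝ} (hJ : 0 < J) (Q : Type)
    [Finite Q] {B : ℝ} (hB : 0 ≤ B) : ∃ C : ℕ, ∀ (e : ℕ)
      (a : Q → (Fin d → Fin (2 ^ e)) → (Fin d → Fin (2 ^ e)) → ℝ), (∀ q c s, |a q c s| ≤ B) →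
      ∃ φ : (Fin d → ℝ) → Q → ℝ, ScaledReluNet C ((2 ^ e) ^ d) (e + 1) φ ∧
        ∀ τ c s, (∀ i, InnerCell (1 / (J * 4 ^ e)) (1 / 4 ^ e) (c i * 2 ^ e + s i) (τ i)) →
          ∀ q, φ τ q = a q c s := by
  cases nonempty_fintype Q
  obtain ⟨C, hind⟩ := exists_scaledReluNet_gridIndicators hd J
  have hnet (e : ℕ) (a : Q → (Fin d → Fin (2 ^ e)) → (Fin d → Fin (2 ^ e)) → ℝ)
      (ha : ∀ q c s, |a q c s| ≤ B) :=
    ((scaledReluNet_retrieve hB ha (C := Fintype.card Q) (by simp)).mono le_rfl le_rfl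
      (Nat.le_add_left 1 e)).comp (hind e) (C₃ := 4) (by simp; omega)
  refine ⟨_, fun e a ha => ⟨_, hnet e a ha, fun τ c s hτ q => ?_⟩⟩
  rw [gridIndicators_eq (by positivity) (by positivity) hτ, retrieve_indicator ha]

end Lookup

/-! ### Taylor approximation of Hölder functions -/

section PartialDerivatives

variable {d : ℕ} {g : (Fin d → ℝ) → ℝ}

/-- The iterated partial derivative `∂_{i₁} ⋯ ∂_{i_m} g` along a list `l = [i₁, …, i_m]` of
directions. -/
def pderList (l : List (Fin d)) (g : (Fin d → ℝ) → ℝ) : (Fin d → ℝ) → ℝ := l.foldr pder g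

theorem contDiff_pder {n : ℕ} (i : Fin d) (hg : ContDiff ℝ (n + 1 : ℕ) g) :
    ContDiff ℝ n (pder i g) :=
  (hg.fderiv_right (by norm_cast)).clm_apply contDiff_const

theorem contDiff_pderList (l : List (Fin d)) {n : ℕ} (hg : ContDiff ℝ (n + l.length : ℕ) g) :
    ContDiff ℝ n (pderList l g) := by
  induction l generalizing n with
  | nil => exact hg
  | cons i l ih =>
    refine contDiff_pder i (ih ?_)
    rwa [add_assoc, add_comm 1]

theorem pder_pder (i j : Fin d) (hg : ContDiff ℝ 2 g) (x : Fin d → ℝ) :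
    pder i (pder j g) x = fderiv ℝ (fderiv ℝ g) x (Pi.single i 1) (Pi.single j 1) := by
  have hdiff : DifferentiableAt ℝ (fderiv ℝ g) x :=
    (hg.fderiv_right (m := 1) (by norm_num)).differentiable one_ne_zero x
  change fderiv ℝ (fun x => fderiv ℝ g x (Pi.single j 1)) x (Pi.single i 1) = _
  simp [fderiv_clm_apply hdiff (differentiableAt_const _)]

theorem pder_comm (i j : Fin d) (hg : ContDiff ℝ 2 g) :
    pder i (pder j g) = pder j (pder i g) := by
  funext x
  rw [pder_pder i j hg, pder_pder j i hg]
  exact (hg.contDiffAt (x := x)).isSymmSndFDerivAt (by simp) _ _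

theorem pderList_perm {l l' : List (Fin d)} (h : l.Perm l') (hg : ContDiff ℝ l.length g) :
    pderList l g = pderList l' g := by
  induction h with
  | nil => rfl
  | cons i _ ih =>
    exact congrArg (pder i) (ih (hg.of_le (by norm_cast; exact Nat.le_succ _)))
  | swap i j l =>
    refine pder_comm j i (contDiff_pderList (n := 2) l ?_)
    rwa [add_comm 2]
  | trans h₁ _ ih₁ ih₂ => rw [ih₁ hg, ih₂ (h₁.length_eq ▸ hg)]

theorem pderm_eq_pderList (α : Fin d → ℕ) (g : (Fin d → ℝ) → ℝ) :
    pderm α g = pderList ((List.finRange d).flatMap fun i => List.replicate (α i) i) g := by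
  unfold pderm pderList
  induction List.finRange d with
  | nil => rfl
  | cons i L ih =>
    rw [List.flatMap_cons, List.foldr_append, List.foldr_cons, ih]
    induction α i with
    | zero => rfl
    | succ n ihn => rw [Function.iterate_succ_apply', ihn, List.replicate_succ, List.foldr_cons]

theorem pderList_eq_pderm (l : List (Fin d)) (hg : ContDiff ℝ l.length g) :
    pderList l g = pderm (fun i => l.count i) g := by
  rw [pderm_eq_pderList]
  refine pderList_perm (List.perm_iff_count.2 fun i => ?_) hg
  simp [List.count_flatMap, Function.comp_def, List.count_replicate, ← Fin.sum_univ_def]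

theorem sum_count_eq_length (l : List (Fin d)) : ∑ i, l.count i = l.length := by
  simpa using Multiset.sum_count_eq_card (s := Finset.univ) (m := (l : Multiset (Fin d))) (by simp)

end PartialDerivatives

section Taylor

theorem hasDerivAt_taylorPolynomial {φ : ℕ → ℝ → ℝ} (k : ℕ) (t : ℝ) :
    HasDerivAt (fun s => ∑ j ∈ Finset.range (k + 2), φ j 0 * (s ^ j / j.factorial))
      (∑ j ∈ Finset.range (k + 1), φ (j + 1) 0 * (t ^ j / j.factorial)) t := by
  have hterm (j : ℕ) : HasDerivAt (fun s : ℝ => φ j 0 * (s ^ j / j.factorial))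
      (φ j 0 * (j * t ^ (j - 1) / j.factorial)) t :=
    ((hasDerivAt_pow j t).div_const _).const_mul _
  refine (HasDerivAt.fun_sum fun j _ => hterm j).congr_deriv ?_
  rw [Finset.sum_range_succ' _ (k + 1)]
  simp only [Nat.cast_zero, zero_mul, zero_div, mul_zero, add_zero, add_tsub_cancel_right,
    Nat.factorial_succ, Nat.cast_mul]
  exact Finset.sum_congr rfl fun j _ => by rw [mul_div_mul_left _ _ (by positivity)]

/-- Only the oscillation of the `k`-th derivative enters, so no derivative of order `k + 1` is
needed. -/
theorem abs_sub_taylorSum_le {E : ℝ} {k : ℕ} {φ : ℕ → ℝ → ℝ}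
    (hφ : ∀ j < k, ∀ s, HasDerivAt (φ j) (φ (j + 1) s) s)
    (hE : ∀ s ∈ Set.Icc (0 : ℝ) 1, |φ k s - φ k 0| ≤ E) {s : ℝ} (hs : s ∈ Set.Icc (0 : ℝ) 1) :
    |φ 0 s - ∑ j ∈ Finset.range (k + 1), φ j 0 * (s ^ j / j.factorial)| ≤ E := by
  induction k generalizing φ s with
  | zero => simpa using hE s hs
  | succ k ih =>
    have hE₀ : 0 ≤ E := (abs_nonneg _).trans (hE s hs)
    have hderiv (t : ℝ) := (hφ 0 k.succ_pos t).sub (hasDerivAt_taylorPolynomial (φ := φ) k t)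
    have hmv := (convex_Icc (0 : ℝ) 1).norm_image_sub_le_of_norm_hasDerivWithin_le
      (fun t _ => (hderiv t).hasDerivWithinAt)
      (fun t ht => ih (fun j hj => hφ (j + 1) (by omega)) hE ht)
      (Set.left_mem_Icc.2 zero_le_one) hs
    have hzero : ∑ j ∈ Finset.range (k + 2), φ j 0 * ((0 : ℝ) ^ j / j.factorial) = φ 0 0 := by
      simp [Finset.sum_range_succ' _ (k + 1)]
    simp only [Pi.sub_apply, hzero, sub_self, sub_zero, Real.norm_eq_abs, abs_of_nonneg hs.1]
      at hmv
    exact hmv.trans (mul_le_of_le_one_right hE₀ hs.2)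

variable {d : ℕ} {f g : (Fin d → ℝ) → ℝ}

theorem hasDerivAt_comp_line (hf : ContDiff ℝ 1 f) (y h : Fin d → ℝ) (s : ℝ) :
    HasDerivAt (fun s : ℝ => f (y + s • h)) (∑ i, h i * pder i f (y + s • h)) s := by
  have hline : HasDerivAt (fun s : ℝ => y + s • h) h s := by
    simpa using ((hasDerivAt_id s).smul_const h).const_add y
  refine ((hf.differentiable one_ne_zero _).hasFDerivAt.comp_hasDerivAt s hline).congr_deriv ?_
  calc fderiv ℝ f (y + s • h) h
      = fderiv ℝ f (y + s • h) (∑ i, h i • Pi.single i 1) := by rw [← pi_eq_sum_univ' h]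
    _ = ∑ i, h i * pder i f (y + s • h) := by simp only [map_sum, map_smul, smul_eq_mul, pder]

theorem hasDerivAt_sum_pderList {j k : ℕ} (hg : ContDiff ℝ k g) (hj : j < k) (y h : Fin d → ℝ)
    (s : ℝ) :
    HasDerivAt
      (fun s : ℝ => ∑ γ : Fin j → Fin d, (∏ l, h (γ l)) * pderList (List.ofFn γ) g (y + s • h))
      (∑ γ : Fin (j + 1) → Fin d, (∏ l, h (γ l)) * pderList (List.ofFn γ) g (y + s • h)) s := by
  have hcons : ∑ γ : Fin (j + 1) → Fin d, (∏ l, h (γ l)) * pderList (List.ofFn γ) g (y + s • h) =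
      ∑ γ : Fin j → Fin d, (∏ l, h (γ l)) *
        ∑ i, h i * pder i (pderList (List.ofFn γ) g) (y + s • h) := by
    rw [← (Fin.consEquiv fun _ => Fin d).sum_comp, Fintype.sum_prod_type, Finset.sum_comm]
    refine Finset.sum_congr rfl fun γ _ => ?_
    rw [Finset.mul_sum]
    refine Finset.sum_congr rfl fun i _ => ?_
    simp only [Fin.consEquiv_apply, Fin.prod_univ_succ, Fin.cons_zero, Fin.cons_succ,
      List.ofFn_succ, pderList, List.foldr_cons]
    ring
  rw [hcons]
  refine HasDerivAt.fun_sum fun γ _ => (hasDerivAt_comp_line ?_ y h s).const_mul _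
  refine contDiff_pderList (n := 1) _ (hg.of_le ?_)
  norm_cast
  simpa [add_comm] using hj

/-- Words of length at most `k` in the `d` coordinates; they index the terms of Taylor polynomials
of order `k`. -/
abbrev TaylorIndex (d k : ℕ) : Type := Σ j : Fin (k + 1), Fin j → Fin d

/-- The coefficient of `∏ l, (x (γ l) - y (γ l))` in the Taylor polynomial of `g` at `y`, written
as a sum over all words `γ` in the coordinates. -/
def taylorCoeff (g : (Fin d → ℝ) → ℝ) (y : Fin d → ℝ) {j : ℕ} (γ : Fin j → Fin d) : ℝ :=
  pderList (List.ofFn γ) g y / j.factorial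

end Taylor

section Cube

variable {d : ℕ} {A : ℝ}

theorem mem_cube_iff_abs_le {x : Fin d → ℝ} : x ∈ cube A d ↔ ∀ i, |x i| ≤ A :=
  forall_congr' fun _ => abs_le.symm

theorem convex_cube : Convex ℝ (cube A d) := by
  have hcube : cube A d = Set.univ.pi fun _ => Set.Icc (-A) A := by
    ext x
    rw [Set.mem_univ_pi]
    rfl
  rw [hcube]
  exact convex_pi fun _ _ => convex_Icc _ _

theorem add_smul_sub_mem_cube {x y : Fin d → ℝ} (hx : x ∈ cube A d) (hy : y ∈ cube A d) {s : ℝ}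
    (hs : s ∈ Set.Icc (0 : ℝ) 1) : y + s • (x - y) ∈ cube A d :=
  convex_cube.add_smul_sub_mem hy hx hs

theorem exists_mem_cube_abs_pder_le {f : (Fin d → ℝ) → ℝ} {K : ℝ} (hA : 0 < A)
    (hf : ContDiff ℝ 1 f) (hK : ∀ x ∈ cube A d, |f x| ≤ K) (i : Fin d) {y : Fin d → ℝ}
    (hy : y ∈ cube A d) : ∃ z ∈ cube A d, |pder i f z| ≤ K / A := by
  have hmem : ∀ s ∈ Set.Icc (-A) A, Function.update y i s ∈ cube A d := fun s hs j => by
    rcases eq_or_ne j i with rfl | hj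
    · simpa using hs
    · simpa [hj] using hy j
  have hline (s : ℝ) :
      Function.update y i 0 + s • (Pi.single i 1 : Fin d → ℝ) = Function.update y i s := by
    ext j
    rcases eq_or_ne j i with rfl | hj <;> simp [*]
  have hderiv (s : ℝ) : HasDerivAt (fun s => f (Function.update y i s))
      (pder i f (Function.update y i s)) s := by
    simpa [hline, Pi.single_apply] using
      hasDerivAt_comp_line hf (Function.update y i 0) (Pi.single i 1) s
  obtain ⟨ξ, hξ, hslope⟩ := exists_hasDerivAt_eq_slope _ _ (neg_lt_self hA)
    (fun s _ => (hderiv s).continuousAt.continuousWithinAt) fun s _ => hderiv s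
  refine ⟨_, hmem ξ (Set.Ioo_subset_Icc_self hξ), ?_⟩
  have hright := hK _ (hmem A (Set.right_mem_Icc.2 (neg_le_self hA.le)))
  have hleft := hK _ (hmem (-A) (Set.left_mem_Icc.2 (neg_le_self hA.le)))
  rw [hslope, abs_div, sub_neg_eq_add, abs_of_pos (by positivity : 0 < A + A),
    div_le_div_iff₀ (by positivity) hA]
  have hsub := (abs_sub _ _).trans (add_le_add hright hleft)
  nlinarith

end Cube

namespace memHolder

variable {A β K : ℝ} {d : ℕ} {g : (Fin d → ℝ) → ℝ}

/-- Since all the bounds `S`, `H` are nonnegative, each of them is at most their sum. -/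
theorem pderm_bounds (hg : memHolder A d β K g) (hA : 0 < A) (hd : 0 < d) (α : Fin d → ℕ)
    (hα : ∑ i, α i ≤ ⌊β⌋₊) :
    (((∑ i, α i : ℕ) : ℝ) < β → ∀ x ∈ cube A d, |pderm α g x| ≤ K) ∧
      (∑ i, α i = ⌊β⌋₊ → ∀ x ∈ cube A d, ∀ y ∈ cube A d, x ≠ y →
        |pderm α g x - pderm α g y| ≤ K * ‖x - y‖ ^ (β - ⌊β⌋₊)) := by
  obtain ⟨-, S, H, hS, hH, hSH⟩ := hg
  set lowOrder : Finset (Fin d → Fin (⌊β⌋₊ + 1)) :=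
    Finset.univ.filter fun α => ((∑ i, (α i : ℕ) : ℕ) : ℝ) < β
  set topOrder : Finset (Fin d → Fin (⌊β⌋₊ + 1)) :=
    Finset.univ.filter fun α => ∑ i, (α i : ℕ) = ⌊β⌋₊
  have hzero : (0 : Fin d → ℝ) ∈ cube A d := fun _ => by simp [hA.le]
  have hcorner : (fun _ => A : Fin d → ℝ) ∈ cube A d := fun _ => by simp [hA.le]
  have hne : (0 : Fin d → ℝ) ≠ fun _ => A := fun h => hA.ne (congrFun h ⟨0, hd⟩)
  have hS₀ : ∀ α ∈ lowOrder, 0 ≤ S α := fun α hα =>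
    (abs_nonneg _).trans (hS α (Finset.mem_filter.1 hα).2 0 hzero)
  have hH₀ : ∀ α ∈ topOrder, 0 ≤ H α := fun α hα => by
    have hpos := Real.rpow_pos_of_pos (norm_pos_iff.2 (sub_ne_zero.2 hne)) (β - ⌊β⌋₊)
    exact nonneg_of_mul_nonneg_left
      ((abs_nonneg _).trans (hH α (Finset.mem_filter.1 hα).2 0 hzero _ hcorner hne)) hpos
  obtain ⟨α, rfl⟩ : ∃ α' : Fin d → Fin (⌊β⌋₊ + 1), (fun i => (α' i : ℕ)) = α :=
    ⟨fun i => ⟨α i, Nat.lt_succ_of_le <|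
      (Finset.single_le_sum (fun _ _ => Nat.zero_le _) (Finset.mem_univ i)).trans hα⟩, rfl⟩
  refine ⟨fun hlt x hx => (hS α hlt x hx).trans ?_,
    fun htop x hx y hy hxy => (hH α htop x hx y hy hxy).trans ?_⟩
  · have hle := Finset.single_le_sum hS₀ (Finset.mem_filter.2 ⟨Finset.mem_univ α, hlt⟩)
    linarith [Finset.sum_nonneg hH₀]
  · have hle := Finset.single_le_sum hH₀ (Finset.mem_filter.2 ⟨Finset.mem_univ α, htop⟩)
    gcongr
    linarith [Finset.sum_nonneg hS₀]

theorem contDiff_length (hg : memHolder A d β K g) {l : List (Fin d)} (hl : l.length ≤ ⌊β⌋₊) :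
    ContDiff ℝ l.length g :=
  hg.1.of_le (by exact_mod_cast hl)

theorem abs_pderList_le_of_lt (hg : memHolder A d β K g) (hA : 0 < A) (hd : 0 < d)
    {l : List (Fin d)} (hl : (l.length : ℝ) < β) {x : Fin d → ℝ} (hx : x ∈ cube A d) :
    |pderList l g x| ≤ K := by
  have hl' := Nat.le_floor hl.le
  rw [pderList_eq_pderm l (hg.contDiff_length hl')]
  rw [← sum_count_eq_length] at hl hl'
  exact (hg.pderm_bounds hA hd _ hl').1 hl x hx

theorem nonneg (hg : memHolder A d β K g) (hA : 0 < A) (hd : 0 < d) (hβ : 0 < β) : 0 ≤ K :=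
  (abs_nonneg _).trans <| hg.abs_pderList_le_of_lt hA hd (l := []) (by simpa using hβ) (x := 0)
    fun _ => by simp [hA.le]

theorem abs_pderList_sub_le (hg : memHolder A d β K g) (hA : 0 < A) (hd : 0 < d) (hβ : 0 < β)
    {l : List (Fin d)} (hl : l.length = ⌊β⌋₊) {x y : Fin d → ℝ} (hx : x ∈ cube A d)
    (hy : y ∈ cube A d) :
    |pderList l g x - pderList l g y| ≤ K * ‖x - y‖ ^ (β - ⌊β⌋₊) := by
  rcases eq_or_ne x y with rfl | hxy
  · have hK := hg.nonneg hA hd hβ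
    simp only [sub_self, abs_zero]
    positivity
  · rw [pderList_eq_pderm l (hg.contDiff_length hl.le)]
    rw [← sum_count_eq_length] at hl
    exact (hg.pderm_bounds hA hd _ hl.le).2 hl x hx y hy hxy

/-- For an integer `β` the derivatives of order `β` are not bounded by assumption; but each of them
is small at some point of the cube, and its oscillation is at most `K`. -/
theorem abs_pderList_le (hg : memHolder A d β K g) (hA : 1 ≤ A) (hd : 0 < d) (hβ : 0 < β)
    {l : List (Fin d)} (hl : l.length ≤ ⌊β⌋₊) {y : Fin d → ℝ} (hy : y ∈ cube A d) :
    |pderList l g y| ≤ 2 * K := by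
  have hA₀ : 0 < A := one_pos.trans_le hA
  have hK := hg.nonneg hA₀ hd hβ
  rcases lt_or_ge (l.length : ℝ) β with hlt | hge
  · linarith [hg.abs_pderList_le_of_lt hA₀ hd hlt hy]
  have hlβ : (l.length : ℝ) = β := le_antisymm ((Nat.le_floor_iff hβ.le).1 hl) hge
  have hlk : l.length = ⌊β⌋₊ := by rw [← hlβ, Nat.floor_natCast]
  cases l with
  | nil => exact absurd hlβ (by simpa using hβ.ne)
  | cons i l =>
    have hlt : (l.length : ℝ) < β := by simp [← hlβ]
    have hsmooth : ContDiff ℝ 1 (pderList l g) := by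
      refine contDiff_pderList (n := 1) l ?_
      simpa [add_comm] using hg.contDiff_length hl
    obtain ⟨z, hz, hbound⟩ := exists_mem_cube_abs_pder_le hA₀ hsmooth
      (fun x hx => hg.abs_pderList_le_of_lt hA₀ hd hlt hx) i hy
    have hosc := hg.abs_pderList_sub_le hA₀ hd hβ hlk hy hz
    rw [← hlk, hlβ, sub_self, Real.rpow_zero, mul_one] at hosc
    have hz' : |pderList (i :: l) g z| ≤ K := hbound.trans (div_le_self hK hA)
    linarith [abs_sub_abs_le_abs_sub (pderList (i :: l) g y) (pderList (i :: l) g z)]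

theorem abs_taylorCoeff_le (hg : memHolder A d β K g) (hA : 1 ≤ A) (hd : 0 < d) (hβ : 0 < β)
    {j : ℕ} (hj : j ≤ ⌊β⌋₊) (γ : Fin j → Fin d) {y : Fin d → ℝ} (hy : y ∈ cube A d) :
    |taylorCoeff g y γ| ≤ 2 * K := by
  rw [taylorCoeff, abs_div, Nat.abs_cast]
  exact (div_le_self (abs_nonneg _) (by exact_mod_cast Nat.factorial_pos j)).trans
    (hg.abs_pderList_le hA hd hβ (by simpa using hj) hy)

theorem abs_topOrderTerm_sub_le (hg : memHolder A d β K g) (hA : 0 < A) (hd : 0 < d) (hβ : 0 < β)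
    {x y : Fin d → ℝ} (hx : x ∈ cube A d) (hy : y ∈ cube A d) {s : ℝ} (hs : s ∈ Set.Icc (0 : ℝ) 1)
    (γ : Fin ⌊β⌋₊ → Fin d) :
    |(∏ l, (x - y) (γ l)) * pderList (List.ofFn γ) g (y + s • (x - y)) -
      (∏ l, (x - y) (γ l)) * pderList (List.ofFn γ) g y| ≤ K * ‖x - y‖ ^ β := by
  have hK := hg.nonneg hA hd hβ
  have hfloor : 0 ≤ β - ⌊β⌋₊ := sub_nonneg.2 (Nat.floor_le hβ.le)
  have hprod : |∏ l, (x - y) (γ l)| ≤ ‖x - y‖ ^ ⌊β⌋₊ := by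
    rw [Finset.abs_prod]
    refine (Finset.prod_le_prod (fun _ _ => abs_nonneg _)
      fun l _ => norm_le_pi_norm (x - y) (γ l)).trans_eq (by simp)
  have hdist : ‖y + s • (x - y) - y‖ ≤ ‖x - y‖ := by
    rw [add_sub_cancel_left, norm_smul, Real.norm_of_nonneg hs.1]
    exact mul_le_of_le_one_left (norm_nonneg _) hs.2
  have hosc := hg.abs_pderList_sub_le hA hd hβ (List.length_ofFn (f := γ))
    (add_smul_sub_mem_cube hx hy hs) hy
  calc _ = |∏ l, (x - y) (γ l)| *
        |pderList (List.ofFn γ) g (y + s • (x - y)) - pderList (List.ofFn γ) g y| := by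
        rw [← mul_sub, abs_mul]
    _ ≤ ‖x - y‖ ^ ⌊β⌋₊ * (K * ‖x - y‖ ^ (β - ⌊β⌋₊)) := by
        gcongr
        exact hosc.trans (by gcongr)
    _ = K * ‖x - y‖ ^ β := by
        rw [mul_left_comm, ← Real.rpow_natCast,
          ← Real.rpow_add_of_nonneg (norm_nonneg _) (by positivity) hfloor, add_sub_cancel]

theorem abs_sub_taylor_le (hg : memHolder A d β K g) (hA : 0 < A) (hd : 0 < d) (hβ : 0 < β)
    {x y : Fin d → ℝ} (hx : x ∈ cube A d) (hy : y ∈ cube A d) :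
    |g x - ∑ γ : TaylorIndex d ⌊β⌋₊, taylorCoeff g y γ.2 * ∏ l, (x (γ.2 l) - y (γ.2 l))| ≤
      d ^ ⌊β⌋₊ * K * ‖x - y‖ ^ β := by
  have hosc : ∀ s ∈ Set.Icc (0 : ℝ) 1,
      |∑ γ : Fin ⌊β⌋₊ → Fin d, (∏ l, (x - y) (γ l)) *
          pderList (List.ofFn γ) g (y + s • (x - y)) -
        ∑ γ : Fin ⌊β⌋₊ → Fin d, (∏ l, (x - y) (γ l)) *
          pderList (List.ofFn γ) g (y + (0 : ℝ) • (x - y))| ≤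
        d ^ ⌊β⌋₊ * K * ‖x - y‖ ^ β := fun s hs => by
    rw [zero_smul, add_zero, ← Finset.sum_sub_distrib]
    refine (Finset.abs_sum_le_sum_abs _ _).trans <| (Finset.sum_le_sum fun γ _ =>
      hg.abs_topOrderTerm_sub_le hA hd hβ hx hy hs γ).trans_eq ?_
    simp [mul_assoc]
  have htaylor := abs_sub_taylorSum_le (k := ⌊β⌋₊)
    (φ := fun j s => ∑ γ : Fin j → Fin d,
      (∏ l, (x - y) (γ l)) * pderList (List.ofFn γ) g (y + s • (x - y)))
    (fun j hj => hasDerivAt_sum_pderList hg.1 hj y (x - y)) hosc (Set.right_mem_Icc.2 zero_le_one)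
  rw [Fintype.sum_sigma, Fin.sum_univ_eq_sum_range fun j => ∑ γ : Fin j → Fin d,
    taylorCoeff g y γ * ∏ l, (x (γ l) - y (γ l))]
  convert htaylor using 4 with j
  · simp [pderList]
  · rw [zero_smul, add_zero, one_pow, Finset.sum_mul]
    refine Finset.sum_congr rfl fun γ _ => ?_
    simp only [taylorCoeff, Pi.sub_apply]
    ring

end memHolder

/-! ### Local polynomial approximation on shifted grids -/

section ShiftedGrids

variable {d : ℕ} {A : ℝ} {J e j : ℕ} {m : Fin d → ℕ} {x : Fin d → ℝ}

/-- A shift by `j * η` spoils `y` only if it moves `y` into the last `η` of a cell; every larger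
shift then moves `y` safely into the next cell. -/
theorem exists_innerCell_of_lt {η y : ℝ} {j' : ℕ} (hη : 0 < η) (hy : 0 ≤ y) (hj : j < j')
    (hj' : j' < J) (hbad : ∀ m, ¬ InnerCell η (J * η) m (y + j * η)) :
    ∃ m, InnerCell η (J * η) m (y + j' * η) := by
  have hJ : (0 : ℝ) < J := by exact_mod_cast (Nat.zero_le j').trans_lt hj'
  have hjj' : (j + 1) * η ≤ j' * η := by gcongr; exact_mod_cast hj
  have hj'J : (j' + 1) * η ≤ J * η := by gcongr; exact_mod_cast hj'
  have hj₀ : 0 ≤ j * η := by positivity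
  have hlow := Nat.floor_le (a := (y + j * η) / (J * η)) (by positivity)
  have hupp := Nat.lt_floor_add_one ((y + j * η) / (J * η))
  set m := ⌊(y + j * η) / (J * η)⌋₊
  rw [le_div_iff₀ (by positivity)] at hlow
  rw [div_lt_iff₀ (by positivity)] at hupp
  have hspoilt : (m + 1) * (J * η) < y + j * η + η := lt_of_not_ge fun h => hbad m ⟨hlow, h⟩
  refine ⟨m + 1, ?_, ?_⟩ <;> push_cast <;> linarith

/-- The point `x` of `[-A, A]^d` lies in the cell `m` of the `j`-th of `J` shifted grids, and away
from its boundary, in the sense of `InnerCell`. The cube is first mapped to `[0, 1/2]^d`, so that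
the `4 ^ e` cells per axis, which cover the unit interval, suffice for all the shifts. -/
def InShiftedCell (A : ℝ) (J e j : ℕ) (m : Fin d → ℕ) (x : Fin d → ℝ) : Prop :=
  ∀ i, InnerCell (1 / (J * 4 ^ e)) (1 / 4 ^ e) (m i)
    ((x i + A) / (4 * A) + j * (1 / (J * 4 ^ e)))

open Classical in
theorem succ_le_card_inShiftedCell (hA : 0 < A) (e : ℕ) (hx : x ∈ cube A d) :
    d + 1 ≤ (Finset.univ.filter fun j : Fin (2 * d + 1) =>
      ∃ m, InShiftedCell A (2 * d + 1) e j m x).card := by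
  set η : ℝ := 1 / ((2 * d + 1 : ℕ) * 4 ^ e) with hη
  have hmesh : (1 : ℝ) / 4 ^ e = (2 * d + 1 : ℕ) * η := by rw [hη]; field_simp
  set bad : Fin d → Finset (Fin (2 * d + 1)) := fun i => Finset.univ.filter fun j =>
    ∀ m, ¬ InnerCell η ((2 * d + 1 : ℕ) * η) m ((x i + A) / (4 * A) + j * η)
  have hbad : ∀ i ∈ Finset.univ, (bad i).card ≤ 1 := fun i _ => by
    refine Finset.card_le_one.2 fun j hj j' hj' => ?_
    have hxi : 0 ≤ (x i + A) / (4 * A) := by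
      have := (hx i).1
      exact div_nonneg (by linarith) (by positivity)
    have hnot {j j' : Fin (2 * d + 1)} (hj : j ∈ bad i) (hj' : j' ∈ bad i) : ¬ j < j' :=
      fun hlt =>
        let ⟨m, hm⟩ := exists_innerCell_of_lt (by positivity) hxi hlt j'.is_lt
          (Finset.mem_filter.1 hj).2
        (Finset.mem_filter.1 hj').2 m hm
    exact le_antisymm (not_lt.1 (hnot hj' hj)) (not_lt.1 (hnot hj hj'))
  have hcover : (Finset.univ.biUnion bad)ᶜ ⊆ Finset.univ.filter fun j : Fin (2 * d + 1) =>
      ∃ m, InShiftedCell A (2 * d + 1) e j m x := fun j hj => by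
    simp only [bad, Finset.mem_compl, Finset.mem_biUnion, Finset.mem_filter, Finset.mem_univ,
      true_and, not_exists, not_forall, not_not] at hj
    choose m hm using hj
    exact Finset.mem_filter.2 ⟨Finset.mem_univ j, m, fun i => by rw [hmesh]; exact hm i⟩
  have hcard := Finset.card_biUnion_le_card_mul _ _ 1 hbad
  refine (Finset.card_le_card hcover).trans' ?_
  rw [Finset.card_compl, Fintype.card_fin]
  simp only [Finset.card_univ, Fintype.card_fin] at hcard
  omega

namespace InShiftedCell

theorem lt (hm : InShiftedCell A J e j m x) (hA : 0 < A) (he : 0 < e) (hj : j < J)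
    (hx : x ∈ cube A d) (i : Fin d) : m i < 4 ^ e := by
  have hxi : (x i + A) / (4 * A) ≤ 1 / 2 := by
    rw [div_le_div_iff₀ (by positivity) two_pos]
    linarith [(hx i).2]
  have hJ : (0 : ℝ) < J := by exact_mod_cast (Nat.zero_le j).trans_lt hj
  have hshift : j * (1 / (J * 4 ^ e)) < (1 : ℝ) / 4 ^ e := by
    rw [mul_one_div, div_lt_div_iff₀ (by positivity) (by positivity), one_mul]
    gcongr
  have h4 : (4 : ℝ) ≤ 4 ^ e := by simpa using pow_le_pow_right₀ (by norm_num : (1 : ℝ) ≤ 4) he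
  have hcell := (hm i).1.trans_lt (add_lt_add_of_le_of_lt hxi hshift)
  rw [mul_one_div, div_add_div _ _ two_ne_zero (by positivity),
    div_lt_div_iff₀ (by positivity) (by positivity)] at hcell
  have hlt : (m i : ℝ) < 4 ^ e := by
    by_contra! hge
    nlinarith
  exact_mod_cast hlt

theorem exists_digits (hm : InShiftedCell A J e j m x) (hA : 0 < A) (he : 0 < e) (hj : j < J)
    (hx : x ∈ cube A d) :
    ∃ c s : Fin d → Fin (2 ^ e), InShiftedCell A J e j (fun i => c i * 2 ^ e + s i) x := by
  have hlt (i : Fin d) : m i < 2 ^ e * 2 ^ e := by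
    rw [← mul_pow]
    exact hm.lt hA he hj hx i
  refine ⟨fun i => ⟨m i / 2 ^ e, Nat.div_lt_of_lt_mul (hlt i)⟩,
    fun i => ⟨m i % 2 ^ e, Nat.mod_lt _ (Nat.two_pow_pos e)⟩, ?_⟩
  simpa only [Nat.div_add_mod'] using hm

end InShiftedCell

/-- The corner of the cell `m` of the `j`-th shifted grid, moved into the cube. -/
def gridPoint (A : ℝ) (J e j : ℕ) (m : Fin d → ℕ) (i : Fin d) : ℝ :=
  max (min (4 * A * (m i * (1 / 4 ^ e) - j * (1 / (J * 4 ^ e))) - A) A) (-A)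

theorem gridPoint_mem_cube (hA : 0 ≤ A) : gridPoint A J e j m ∈ cube A d := fun _ =>
  ⟨le_max_right _ _, max_le (min_le_right _ _) (neg_le_self hA)⟩

theorem InShiftedCell.norm_sub_gridPoint_le (hm : InShiftedCell A J e j m x) (hA : 0 < A)
    (hx : x ∈ cube A d) : ‖x - gridPoint A J e j m‖ ≤ 4 * A * (1 / 4 ^ e) := by
  refine (pi_norm_le_iff_of_nonneg (by positivity)).2 fun i => ?_
  obtain ⟨hlow, hupp⟩ := hm i
  have hη : (0 : ℝ) ≤ 1 / (J * 4 ^ e) := by positivity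
  set corner := m i * (1 / 4 ^ e) - j * (1 / ((J : ℝ) * 4 ^ e))
  have hclip : max (min (x i) A) (-A) = x i := by
    rw [min_eq_left (hx i).2, max_eq_left (hx i).1]
  calc |x i - gridPoint A J e j m i|
      = |max (min (x i) A) (-A) - max (min (4 * A * corner - A) A) (-A)| := by
        rw [hclip, gridPoint]
    _ ≤ |min (x i) A - min (4 * A * corner - A) A| := abs_max_sub_max_le_abs _ _ _
    _ ≤ |x i - (4 * A * corner - A)| := by
        simpa using abs_min_sub_min_le_max (x i) A (4 * A * corner - A) A
    _ = 4 * A * |(x i + A) / (4 * A) - corner| := by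
        rw [← abs_of_pos (by positivity : 0 < 4 * A), ← abs_mul,
          abs_of_pos (by positivity : 0 < 4 * A)]
        congr 1
        field_simp
        ring
    _ ≤ 4 * A * (1 / 4 ^ e) := by
        gcongr
        rw [abs_le]
        constructor <;> linarith

end ShiftedGrids

section LocalPolynomial

variable {d J : ℕ} {A : ℝ}

theorem boundedAffine_shiftedGrid (hA : 1 ≤ A) {e j : ℕ} (hj : j < J) (i : Fin d) :
    BoundedAffine 2 fun x : Fin d → ℝ => (x i + A) / (4 * A) + j * (1 / (J * 4 ^ e)) := by
  have hslope : |1 / (4 * A)| ≤ 1 / 4 := by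
    rw [abs_of_pos (by positivity)]
    gcongr
    linarith
  have hη : (j : ℝ) * (1 / (J * 4 ^ e)) ≤ 1 := by
    have hJ : (0 : ℝ) < J := by exact_mod_cast (Nat.zero_le j).trans_lt hj
    have h4 : (1 : ℝ) ≤ 4 ^ e := one_le_pow₀ (by norm_num)
    have hjJ : (j : ℝ) ≤ J := by exact_mod_cast hj.le
    rw [mul_one_div, div_le_one (by positivity)]
    nlinarith
  have hshift : |1 / 4 + (j : ℝ) * (1 / (J * 4 ^ e))| ≤ 5 / 4 := by
    rw [abs_of_nonneg (by positivity)]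
    linarith
  have haff := (((BoundedAffine.coord (ι := Fin d) i).const_mul (1 / (4 * A))).add
    (.const (1 / 4 + (j : ℝ) * (1 / (J * 4 ^ e))))).mono (by linarith : _ ≤ (2 : ℝ))
  convert haff using 2 with x
  field_simp
  ring

theorem exists_scaledReluNet_cellwisePolynomial (hA : 1 ≤ A) (hd : 0 < d) (hJ : 0 < J)
    {Q : Type} [Finite Q] (p : MvPolynomial (Fin d ⊕ Q) ℝ) {B : ℝ} (hB : 0 ≤ B) (b : ℕ) :
    ∃ (C : ℕ) (D : ℝ), ∀ (e j : ℕ), j < J →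
      ∀ a : Q → (Fin d → Fin (2 ^ e)) → (Fin d → Fin (2 ^ e)) → ℝ, (∀ q c s, |a q c s| ≤ B) →
      ∃ φ : (Fin d → ℝ) → ℝ,
        ScaledReluNet C ((2 ^ e) ^ d) (e + 1) (fun x (_ : Unit) => φ x) ∧
        ∀ x ∈ cube A d, ∀ c s, InShiftedCell A J e j (fun i => c i * 2 ^ e + s i) x →
          |φ x - MvPolynomial.eval (Sum.elim x fun q => a q c s) p| ≤ D / 4 ^ (b * e) := by
  cases nonempty_fintype Q
  obtain ⟨C₁, hlookup⟩ := exists_scaledReluNet_lookup hd (J := J) (by exact_mod_cast hJ) Q hB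
  obtain ⟨C₂, D, hpoly⟩ := GeometricallyApproximable.mvPolynomial_eval (R := max A B) p
  choose ψ hψ hψp using hpoly
  obtain ⟨C, hnet⟩ : ∃ C, ∀ (e j : ℕ), j < J → ∀ φ : (Fin d → ℝ) → Q → ℝ,
      ScaledReluNet C₁ ((2 ^ e) ^ d) (e + 1) φ →
      ScaledReluNet C ((2 ^ e) ^ d) (e + 1) fun x (_ : Unit) => ψ (b * e) (Sum.elim x
        (φ fun i => (x i + A) / (4 * A) + j * (1 / (J * 4 ^ e)))) := by
    have heval (e : ℕ) : ScaledReluNet C₂ (1 * (2 ^ e) ^ d) ((b + 1) * (e + 1))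
        fun y (_ : Unit) => ψ (b * e) y :=
      (hψ (b * e)).mono le_rfl (Nat.mul_pos one_pos (by positivity)) (by nlinarith)
    exact ⟨_, fun e j hj φ hφ => ((heval e).of_mul_scales one_pos b.succ_pos).comp_sum_elim
      (hφ.comp (.of_affine (boundedAffine_shiftedGrid (e := e) hA hj))
        (Nat.le_mul_of_pos_right (2 * Fintype.card (Fin d)) (by positivity)))
      (Nat.le_mul_of_pos_right (2 * (Fintype.card (Fin d) + Fintype.card Q)) (by positivity))⟩
  refine ⟨C, D, fun e j hj a ha => ?_⟩
  obtain ⟨φ, hφ, hφa⟩ := hlookup e a ha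
  refine ⟨_, hnet e j hj φ hφ, fun x hx c s hm => ?_⟩
  rw [show φ (fun i => (x i + A) / (4 * A) + j * (1 / (J * 4 ^ e))) = fun q => a q c s from
    funext (hφa _ c s hm)]
  refine hψp (b * e) _ ((pi_norm_le_iff_of_nonneg (by positivity)).2 ?_)
  rintro (i | q)
  · exact (mem_cube_iff_abs_le.1 hx i).trans (le_max_left _ _)
  · exact (ha q c s).trans (le_max_right _ _)

end LocalPolynomial

section HolderApproximation

variable {d : ℕ} {A : ℝ}

/-- The Taylor polynomial of order `k`, as a polynomial in the argument, in the centre and in the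
Taylor coefficients. -/
def taylorPolynomial (d k : ℕ) : MvPolynomial (Fin d ⊕ (Fin d ⊕ TaylorIndex d k)) ℝ :=
  ∑ γ : TaylorIndex d k, .X (.inr (.inr γ)) *
    ∏ l, (.X (.inl (γ.2 l)) - .X (.inr (.inl (γ.2 l))))

theorem eval_taylorPolynomial {k : ℕ} (x y : Fin d → ℝ) (c : TaylorIndex d k → ℝ) :
    (taylorPolynomial d k).eval (Sum.elim x (Sum.elim y c)) =
      ∑ γ : TaylorIndex d k, c γ * ∏ l, (x (γ.2 l) - y (γ.2 l)) := by
  simp [taylorPolynomial, map_sum, map_prod]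

theorem memHolder.abs_taylorTable_le {β K : ℝ} {g : (Fin d → ℝ) → ℝ} (hg : memHolder A d β K g)
    (hA : 1 ≤ A) (hd : 0 < d) (hβ : 0 < β) {y : Fin d → ℝ} (hy : y ∈ cube A d)
    (q : Fin d ⊕ TaylorIndex d ⌊β⌋₊) :
    |Sum.elim y (fun γ : TaylorIndex d ⌊β⌋₊ => taylorCoeff g y γ.2) q| ≤ A + 2 * |K| := by
  have hK : 0 ≤ |K| := abs_nonneg K
  rcases q with i | γ
  · rw [Sum.elim_inl]
    linarith [mem_cube_iff_abs_le.1 hy i]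
  · rw [Sum.elim_inr]
    linarith [hg.abs_taylorCoeff_le hA hd hβ (Nat.le_of_lt_succ γ.1.is_lt) γ.2 hy, le_abs_self K]

theorem exists_scaledReluNet_approx_on_shiftedGrid (hA : 1 ≤ A) (hd : 0 < d) {J : ℕ} (hJ : 0 < J)
    {β : ℝ} (hβ : 0 < β) (K : ℝ) :
    ∃ (C : ℕ) (D : ℝ), ∀ g, memHolder A d β K g → ∀ e, 0 < e → ∀ j < J,
      ∃ φ : (Fin d → ℝ) → ℝ,
        ScaledReluNet C ((2 ^ e) ^ d) (e + 1) (fun x (_ : Unit) => φ x) ∧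
        ∀ x ∈ cube A d, (∃ m, InShiftedCell A J e j m x) → |φ x - g x| ≤ D * (1 / 4 ^ e) ^ β := by
  have hA₀ : 0 < A := one_pos.trans_le hA
  obtain ⟨C, D, hnet⟩ := exists_scaledReluNet_cellwisePolynomial hA hd hJ
    (taylorPolynomial d ⌊β⌋₊) (by positivity : 0 ≤ A + 2 * |K|) ⌈β⌉₊
  refine ⟨C, |D| + d ^ ⌊β⌋₊ * |K| * (4 * A) ^ β, fun g hg e he j hj => ?_⟩
  let centre (c s : Fin d → Fin (2 ^ e)) : Fin d → ℝ :=
    gridPoint A J e j fun i => c i * 2 ^ e + s i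
  obtain ⟨φ, hφ, happrox⟩ := hnet e j hj
    (fun q c s => Sum.elim (centre c s)
      (fun γ : TaylorIndex d ⌊β⌋₊ => taylorCoeff g (centre c s) γ.2) q)
    fun q c s => hg.abs_taylorTable_le hA hd hβ (gridPoint_mem_cube hA₀.le) q
  refine ⟨φ, hφ, fun x hx ⟨m, hm⟩ => ?_⟩
  obtain ⟨c, s, hcs⟩ := hm.exists_digits hA₀ he hj hx
  have hnum := happrox x hx c s hcs
  rw [eval_taylorPolynomial] at hnum
  have htaylor := hg.abs_sub_taylor_le hA₀ hd hβ hx (gridPoint_mem_cube hA₀.le : centre c s ∈ _)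
  have hmesh : D / 4 ^ (⌈β⌉₊ * e) ≤ |D| * (1 / 4 ^ e) ^ β := by
    rw [div_eq_mul_one_div, mul_comm ⌈β⌉₊, pow_mul, ← one_div_pow, ← Real.rpow_natCast]
    exact mul_le_mul (le_abs_self D) (Real.rpow_le_rpow_of_exponent_ge (by positivity)
      (div_le_one_of_le₀ (one_le_pow₀ (by norm_num)) (by positivity)) (Nat.le_ceil β))
      (by positivity) (abs_nonneg D)
  have hdist : d ^ ⌊β⌋₊ * K * ‖x - centre c s‖ ^ β ≤
      d ^ ⌊β⌋₊ * |K| * (4 * A) ^ β * (1 / 4 ^ e) ^ β := by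
    rw [mul_assoc _ ((4 * A) ^ β), ← Real.mul_rpow (by positivity) (by positivity)]
    gcongr
    · exact le_abs_self K
    · exact hcs.norm_sub_gridPoint_le hA₀ hx
  rw [abs_le] at hnum htaylor ⊢
  rw [add_mul]
  constructor <;> linarith

/-- Each of the `d` coordinates spoils at most one of the `2 * d + 1` shifted grids, so the median
over the shifts is accurate on the whole cube. -/
theorem exists_scaledReluNet_approx_memHolder (hA : 1 ≤ A) (hd : 0 < d) {β : ℝ} (hβ : 0 < β)
    (K : ℝ) :
    ∃ (C : ℕ) (D : ℝ), ∀ g, memHolder A d β K g → ∀ e, 0 < e →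
      ∃ φ : (Fin d → ℝ) → ℝ,
        ScaledReluNet C ((2 ^ e) ^ d) (e + 1) (fun x (_ : Unit) => φ x) ∧
        ∀ x ∈ cube A d, |φ x - g x| ≤ D * (1 / 4 ^ e) ^ β := by
  classical
  obtain ⟨C₁, D, hshift⟩ :=
    exists_scaledReluNet_approx_on_shiftedGrid hA hd (Nat.succ_pos (2 * d)) hβ K
  obtain ⟨C₂, hmedian⟩ := reluRealizable_median d
  obtain ⟨C, hnet⟩ : ∃ C, ∀ e (φ : Fin (2 * d + 1) → (Fin d → ℝ) → ℝ),
      (∀ j, ScaledReluNet C₁ ((2 ^ e) ^ d) (e + 1) fun x (_ : Unit) => φ j x) →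
      ScaledReluNet C ((2 ^ e) ^ d) (e + 1) fun x (_ : Unit) => median fun j => φ j x :=
    ⟨_, fun e φ hφ => (hmedian.mono le_rfl (Nat.pos_of_neZero ((2 ^ e) ^ d))
      (Nat.le_add_left 1 e)).comp (.pi hφ)
      (Nat.le_mul_of_pos_right (2 * Fintype.card (Fin (2 * d + 1))) (Nat.pos_of_neZero _))⟩
  refine ⟨C, D, fun g hg e he => ?_⟩
  choose φ hφ happrox using fun j : Fin (2 * d + 1) => hshift g hg e he j j.is_lt
  refine ⟨_, hnet e φ hφ, fun x hx => ?_⟩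
  exact abs_median_sub_le (succ_le_card_inShiftedCell (one_pos.trans_le hA) e hx)
    fun j hj => happrox j x hx (Finset.mem_filter.1 hj).2

end HolderApproximation

/-! ### Approximation rates -/

section Rates

variable {P : Finset (ℝ × ℕ)} {p : ℝ × ℕ} {n : ℕ}

/-- The depth scale `log₂ n`, rounded up. -/
def depthScale (n : ℕ) : ℕ := ⌈Real.logb 2 n⌉₊

/-- The width scale `maxWidthExp P hP n`, rounded up. -/
def widthScale (P : Finset (ℝ × ℕ)) (hP : P.Nonempty) (n : ℕ) : ℕ := ⌈maxWidthExp P hP n⌉₊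

/-- The number of binary digits of the grid for which the approximation of a `p.1`-Hölder function
of `p.2` variables has error of order `n ^ (-p.1 / (2 * p.1 + p.2))`. -/
def gridExponent (p : ℝ × ℕ) (n : ℕ) : ℕ := ⌈Real.logb 2 n / (2 * (2 * p.1 + p.2))⌉₊

theorem one_le_logb_two (hn : 2 ≤ n) : 1 ≤ Real.logb 2 n := by
  rw [Real.le_logb_iff_rpow_le one_lt_two (by positivity), Real.rpow_one]
  exact_mod_cast hn

theorem depthScale_pos (hn : 2 ≤ n) : 0 < depthScale n :=
  Nat.ceil_pos.2 (one_pos.trans_le (one_le_logb_two hn))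

theorem depthScale_le (hn : 2 ≤ n) : (depthScale n : ℝ) ≤ 2 * Real.logb 2 n := by
  have hlog := one_le_logb_two hn
  have hceil : (depthScale n : ℝ) < Real.logb 2 n + 1 :=
    Nat.ceil_lt_add_one (one_pos.le.trans hlog)
  linarith

theorem one_le_maxWidthExp (hP : P.Nonempty) (hβ : ∀ p ∈ P, 0 < p.1) (hn : 1 ≤ n) :
    1 ≤ maxWidthExp P hP n :=
  let ⟨p, hp⟩ := hP
  have := hβ p hp
  (Real.one_le_rpow (by exact_mod_cast hn) (by positivity)).trans
    (Finset.le_sup' (fun p : ℝ × ℕ => (n : ℝ) ^ ((p.2 : ℝ) / (2 * (2 * p.1 + p.2)))) hp)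

theorem widthScale_pos (hP : P.Nonempty) (hβ : ∀ p ∈ P, 0 < p.1) (hn : 1 ≤ n) :
    0 < widthScale P hP n :=
  Nat.ceil_pos.2 (one_pos.trans_le (one_le_maxWidthExp hP hβ hn))

theorem widthScale_le (hP : P.Nonempty) (hβ : ∀ p ∈ P, 0 < p.1) (hn : 1 ≤ n) :
    (widthScale P hP n : ℝ) ≤ 2 * maxWidthExp P hP n := by
  have hwidth := one_le_maxWidthExp hP hβ hn
  have hceil : (widthScale P hP n : ℝ) < maxWidthExp P hP n + 1 :=
    Nat.ceil_lt_add_one (one_pos.le.trans hwidth)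
  linarith

theorem maxRate_nonneg (hP : P.Nonempty) (n : ℕ) : 0 ≤ maxRate P hP n :=
  let ⟨_, hp⟩ := hP
  (Real.rpow_nonneg n.cast_nonneg _).trans
    (Finset.le_sup' (fun p : ℝ × ℕ => (n : ℝ) ^ (-(p.1 / (2 * p.1 + p.2)))) hp)

theorem eventually_mul_maxRate_le_one (hP : P.Nonempty) (hβ : ∀ p ∈ P, 0 < p.1) (c : ℝ) :
    ∀ᶠ n in Filter.atTop, c * maxRate P hP n ≤ 1 := by
  have hlim : Filter.Tendsto (maxRate P hP) Filter.atTop (nhds (P.sup' hP fun _ => (0 : ℝ))) :=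
    Filter.Tendsto.finset_sup'_nhds_apply hP fun p hp =>
      have := hβ p hp
      (tendsto_rpow_neg_atTop (by positivity)).comp tendsto_natCast_atTop_atTop
  rw [Finset.sup'_const] at hlim
  have hmul := hlim.const_mul c
  rw [mul_zero] at hmul
  exact (hmul.eventually_lt_const one_pos).mono fun _ => le_of_lt

section gridExponent

theorem gridExponent_pos (hp : 0 < p.1) (hn : 2 ≤ n) : 0 < gridExponent p n := by
  have := one_le_logb_two hn
  exact Nat.ceil_pos.2 (by positivity)

theorem gridExponent_le_depthScale (hβ : 0 < p.1) (hd : 0 < p.2) (hn : 2 ≤ n) :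
    gridExponent p n ≤ depthScale n := by
  have hd' : (1 : ℝ) ≤ p.2 := by exact_mod_cast hd
  exact Nat.ceil_le_ceil (div_le_self (one_pos.le.trans (one_le_logb_two hn)) (by linarith))

theorem two_rpow_logb_div (hn : 0 < n) (b : ℝ) :
    (2 : ℝ) ^ (Real.logb 2 n / b) = (n : ℝ) ^ (1 / b) := by
  rw [div_eq_mul_one_div, Real.rpow_mul two_pos.le,
    Real.rpow_logb two_pos (by norm_num) (by exact_mod_cast hn)]

theorem rpow_le_two_pow_gridExponent (hn : 0 < n) :
    (n : ℝ) ^ (1 / (2 * (2 * p.1 + p.2))) ≤ 2 ^ gridExponent p n := by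
  rw [← two_rpow_logb_div hn, ← Real.rpow_natCast]
  exact Real.rpow_le_rpow_of_exponent_le one_le_two (Nat.le_ceil _)

theorem two_pow_gridExponent_le (hβ : 0 < p.1) (hn : 2 ≤ n) :
    (2 : ℝ) ^ gridExponent p n ≤ 2 * (n : ℝ) ^ (1 / (2 * (2 * p.1 + p.2))) := by
  have hlog := one_le_logb_two hn
  have hceil : (gridExponent p n : ℝ) ≤ 1 + Real.logb 2 n / (2 * (2 * p.1 + p.2)) := by
    rw [add_comm]
    exact (Nat.ceil_lt_add_one (by positivity)).le
  rw [← two_rpow_logb_div (by omega), ← Real.rpow_one_add' (by positivity) (by positivity),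
    ← Real.rpow_natCast]
  exact Real.rpow_le_rpow_of_exponent_le one_le_two hceil

theorem two_pow_gridExponent_pow_le (hP : P.Nonempty) (hp : p ∈ P) (hβ : 0 < p.1) (hn : 2 ≤ n) :
    (2 ^ gridExponent p n) ^ p.2 ≤ 2 ^ p.2 * widthScale P hP n := by
  have hreal : ((2 : ℝ) ^ gridExponent p n) ^ p.2 ≤ 2 ^ p.2 * widthScale P hP n :=
    calc ((2 : ℝ) ^ gridExponent p n) ^ p.2
        ≤ (2 * (n : ℝ) ^ (1 / (2 * (2 * p.1 + p.2)))) ^ p.2 := by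
          gcongr
          exact two_pow_gridExponent_le hβ hn
      _ = 2 ^ p.2 * (n : ℝ) ^ ((p.2 : ℝ) / (2 * (2 * p.1 + p.2))) := by
          rw [mul_pow, ← Real.rpow_mul_natCast n.cast_nonneg, one_div_mul_eq_div]
      _ ≤ 2 ^ p.2 * widthScale P hP n := by
          gcongr
          exact (Finset.le_sup' (fun p : ℝ × ℕ => (n : ℝ) ^ ((p.2 : ℝ) / (2 * (2 * p.1 + p.2))))
            hp).trans (Nat.le_ceil _)
  exact_mod_cast hreal

theorem one_div_four_pow_gridExponent_rpow_le (hP : P.Nonempty) (hp : p ∈ P) (hβ : 0 < p.1)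
    (hn : 0 < n) : (1 / 4 ^ gridExponent p n : ℝ) ^ p.1 ≤ maxRate P hP n := by
  have hn' : (0 : ℝ) < n := by exact_mod_cast hn
  set b : ℝ := 2 * (2 * p.1 + p.2) with hb
  calc (1 / 4 ^ gridExponent p n : ℝ) ^ p.1
      = (1 / (2 ^ gridExponent p n) ^ 2) ^ p.1 := by
        rw [← pow_mul, mul_comm, pow_mul]
        norm_num
    _ ≤ (1 / ((n : ℝ) ^ (1 / b)) ^ 2) ^ p.1 := by
        gcongr
        exact rpow_le_two_pow_gridExponent hn
    _ = (n : ℝ) ^ (-(p.1 / (2 * p.1 + p.2))) := by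
        rw [← Real.rpow_mul_natCast hn'.le, one_div, ← Real.rpow_neg hn'.le,
          ← Real.rpow_mul hn'.le, hb]
        congr 1
        push_cast
        field_simp
    _ ≤ maxRate P hP n :=
        Finset.le_sup' (fun p : ℝ × ℕ => (n : ℝ) ^ (-(p.1 / (2 * p.1 + p.2)))) hp

end gridExponent

theorem exists_scaledReluNet_approx_of_mem {A : ℝ} (hA : 1 ≤ A) (K : ℝ) (hP : P.Nonempty)
    (hp : p ∈ P) (hβ : 0 < p.1) (hd : 0 < p.2) :
    ∃ (C : ℕ) (D : ℝ), ∀ g, memHolder A p.2 p.1 K g → ∀ n, 2 ≤ n →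
      ∃ φ : (Fin p.2 → ℝ) → ℝ,
        ScaledReluNet C (widthScale P hP n) (depthScale n) (fun x (_ : Unit) => φ x) ∧
        ∀ x ∈ cube A p.2, |φ x - g x| ≤ D * maxRate P hP n := by
  obtain ⟨C, D, hnet⟩ := exists_scaledReluNet_approx_memHolder hA hd hβ K
  refine ⟨C * 2 ^ p.2 * 2, |D|, fun g hg n hn => ?_⟩
  obtain ⟨φ, hφ, happrox⟩ := hnet g hg (gridExponent p n) (gridExponent_pos hβ hn)
  have hdepth : gridExponent p n + 1 ≤ 2 * depthScale n := by
    have := gridExponent_le_depthScale hβ hd hn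
    have := depthScale_pos hn
    omega
  refine ⟨φ, (hφ.mono le_rfl (two_pow_gridExponent_pow_le hP hp hβ hn) hdepth).of_mul_scales
    (by positivity) two_pos, fun x hx => (happrox x hx).trans ?_⟩
  exact mul_le_mul (le_abs_self D)
    (one_div_four_pow_gridExponent_rpow_le hP hp hβ (two_pos.trans_le hn))
    (by positivity) (abs_nonneg D)

theorem exists_scaledReluNet_approx_at_maxRate {A : ℝ} (hA : 1 ≤ A) (K : ℝ) (hP : P.Nonempty)
    (hβ : ∀ p ∈ P, 0 < p.1) (hd : ∀ p ∈ P, 0 < p.2) :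
    ∃ (C : ℕ) (D : ℝ), ∀ p ∈ P, ∀ g, memHolder A p.2 p.1 K g → ∀ n, 2 ≤ n →
      ∃ φ : (Fin p.2 → ℝ) → ℝ,
        ScaledReluNet C (widthScale P hP n) (depthScale n) (fun x (_ : Unit) => φ x) ∧
        ∀ x ∈ cube A p.2, |φ x - g x| ≤ D * maxRate P hP n := by
  choose! C D hnet using fun p hp =>
    exists_scaledReluNet_approx_of_mem hA K hP hp (hβ p hp) (hd p hp)
  refine ⟨P.sup C, P.sup' hP D, fun p hp g hg n hn => ?_⟩
  obtain ⟨φ, hφ, happrox⟩ := hnet p hp g hg n hn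
  exact ⟨φ, hφ.mono (Finset.le_sup hp) le_rfl le_rfl, fun x hx => (happrox x hx).trans
    (mul_le_mul_of_nonneg_right (Finset.le_sup' D hp) (maxRate_nonneg hP n))⟩

end Rates

/-! ### Hierarchical compositions -/

theorem ScaledReluNet.comp_blocks {ι κ I : Type} {η : I → Type} [Fintype ι] [Fintype κ]
    [Fintype I] [∀ i, Fintype (η i)] {C₁ C₂ C₃ C₄ V T : ℕ} [NeZero V] [NeZero T]
    {φ : (ι → ℝ) → κ → ℝ} {ψ : ∀ i, (η i → ℝ) → ℝ} (hφ : ScaledReluNet C₁ V T φ)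
    (hψ : ∀ i, ScaledReluNet C₂ V T fun y (_ : Unit) => ψ i y) (e : ∀ i, η i → κ)
    (hκ : 2 * Fintype.card κ ≤ C₃ * V) (hη : ∀ i, 2 * Fintype.card (η i) ≤ C₄ * V) :
    ScaledReluNet (C₁ + (Fintype.card I + 1) * (1 + C₂ + C₄ + 1 + 3) + C₃ + 1) V T
      fun x i => ψ i fun j => φ x (e i j) :=
  (pi fun i => (hψ i).comp_coord (e i) (hη i)).comp hφ hκ

/-- The requirements on a component `g_{l,i}` with smoothness and dimension `p = (β', d')` of a
hierarchical composition, the Hölder ball being taken on the cube of radius `A`. -/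
structure IsBuildingBlock (A K F CLip : ℝ) (p : ℝ × ℕ) (g : (Fin p.2 → ℝ) → ℝ) : Prop where
  lipschitz : ∀ y z, |g y - g z| ≤ CLip * Real.sqrt (∑ j, (y j - z j) ^ 2)
  holder : memHolder A p.2 p.1 K g
  abs_le : ∀ y, |g y| ≤ F

theorem sqrt_sum_sq_le_sum_abs {ι : Type*} [Fintype ι] (v : ι → ℝ) :
    Real.sqrt (∑ j, v j ^ 2) ≤ ∑ j, |v j| := by
  refine Real.sqrt_le_iff.2 ⟨Finset.sum_nonneg fun _ _ => abs_nonneg _, ?_⟩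
  simpa only [sq_abs] using
    Finset.sum_sq_le_sq_sum_of_nonneg (s := Finset.univ) fun j _ => abs_nonneg (v j)

theorem IsBuildingBlock.abs_sub_le {A K F CLip ε δ : ℝ} {p : ℝ × ℕ} {g ψ : (Fin p.2 → ℝ) → ℝ}
    (hg : IsBuildingBlock A K F CLip p g) {y z : Fin p.2 → ℝ} (hψ : |ψ y - g y| ≤ ε)
    (hyz : ∀ j, |y j - z j| ≤ δ) : |ψ y - g z| ≤ ε + |CLip| * (p.2 * δ) := by
  have hdist : Real.sqrt (∑ j, (y j - z j) ^ 2) ≤ p.2 * δ :=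
    (sqrt_sum_sq_le_sum_abs fun j => y j - z j).trans
      ((Finset.sum_le_sum fun j _ => hyz j).trans_eq (by simp))
  calc |ψ y - g z| ≤ |ψ y - g y| + |g y - g z| := _root_.abs_sub_le _ _ _
    _ ≤ ε + |CLip| * Real.sqrt (∑ j, (y j - z j) ^ 2) :=
        add_le_add hψ ((hg.lipschitz y z).trans
          (mul_le_mul_of_nonneg_right (le_abs_self _) (Real.sqrt_nonneg _)))
    _ ≤ ε + |CLip| * (p.2 * δ) := by gcongr

/-- The possible vectors `(f_{l,1}, …, f_{l,N_l})` at level `l` of a hierarchical composition. An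
arbitrary selection of coordinates of the previous level may be fed into each component, not only
the consecutive blocks of `followsHCS`. -/
def hierarchyLevel (d : ℕ) (N : ℕ → ℕ) (P : Finset (ℝ × ℕ)) (A K F CLip : ℝ) :
    (l : ℕ) → Set ((Fin d → ℝ) → Fin (N l) → ℝ)
  | 0 => {f | ∃ e : Fin (N 0) → Fin d, ∀ x i, f x i = x (e i)}
  | l + 1 => {f | ∃ h ∈ hierarchyLevel d N P A K F CLip l, ∀ i, ∃ p ∈ P, ∃ g,
      IsBuildingBlock A K F CLip p g ∧
        ∃ e : Fin p.2 → Fin (N l), ∀ x, f x i = g fun j => h x (e j)}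

theorem sum_range_add_lt_sum_range {m i j : ℕ} {s : ℕ → ℕ} (hi : i < m) (hj : j < s i) :
    (∑ k ∈ Finset.range i, s k) + j < ∑ k ∈ Finset.range m, s k :=
  calc (∑ k ∈ Finset.range i, s k) + j < ∑ k ∈ Finset.range (i + 1), s k := by
        rw [Finset.sum_range_succ]
        omega
    _ ≤ ∑ k ∈ Finset.range m, s k := Finset.sum_le_sum_of_subset (Finset.range_subset_range.2 hi)

theorem followsHCS.exists_mem_hierarchyLevel {a K F CLip : ℝ} {d q : ℕ} {N : ℕ → ℕ}
    {P : Finset (ℝ × ℕ)} {f : (Fin d → ℝ) → ℝ} (hf : followsHCS a d q N P K F CLip f) :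
    ∃ h ∈ hierarchyLevel d N P (max a (2 * F)) K F CLip q, ∃ i, ∀ x, f x = h x i := by
  obtain ⟨-, hNq, fl, β, s, g, hfl₀, hfl, hs, hf⟩ := hf
  have hmem : ∀ l ≤ q, (fun x (i : Fin (N l)) => fl l i x) ∈
      hierarchyLevel d N P (max a (2 * F)) K F CLip l := by
    intro l hl
    induction l with
    | zero =>
      choose e he using fun i : Fin (N 0) => hfl₀ i i.2
      exact ⟨e, fun x i => he i x⟩
    | succ l ih =>
      refine ⟨_, ih (by omega), fun i => ?_⟩
      obtain ⟨hp, hLip, hHolder, hbound, heq⟩ := hfl (l + 1) (by omega) hl i i.2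
      refine ⟨_, hp, g (l + 1) i, ⟨hLip, hHolder, hbound⟩, fun j => ⟨_, ?_⟩, heq⟩
      exact (sum_range_add_lt_sum_range i.2 j.2).trans_eq (hs (l + 1) (by omega) hl)
  exact ⟨_, hmem q le_rfl, ⟨0, by omega⟩, hf⟩

/-- Approximability of a class of vector valued functions on `[−a,a]^d`, at the rate `maxRate P hP`,
by ReLU networks of the corresponding size whose values stay in `[-A,A]`. Neither the constants nor
the threshold for `n` depend on the function. -/
def UniformlyApproximable (P : Finset (ℝ × ℕ)) (hP : P.Nonempty) (a A : ℝ) {d : ℕ} {κ : Type}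
    (𝓕 : Set ((Fin d → ℝ) → κ → ℝ)) : Prop :=
  ∃ (C : ℕ) (D : ℝ), ∀ᶠ n in Filter.atTop, ∀ f ∈ 𝓕, ∃ φ : (Fin d → ℝ) → κ → ℝ,
    ScaledReluNet C (widthScale P hP n) (depthScale n) φ ∧
      ∀ x ∈ cube a d, ∀ i, |φ x i - f x i| ≤ D * maxRate P hP n ∧ |φ x i| ≤ A

section Hierarchy

variable {d l : ℕ} {N : ℕ → ℕ} {P : Finset (ℝ × ℕ)} {hP : P.Nonempty} {a A F : ℝ}

theorem UniformlyApproximable.hierarchyLevel_succ (hβ : ∀ p ∈ P, 0 < p.1)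
    (hd : ∀ p ∈ P, 0 < p.2) (hF : 1 ≤ F) (hA : 2 * F ≤ A) {K CLip : ℝ}
    (h : UniformlyApproximable P hP a A (hierarchyLevel d N P A K F CLip l)) :
    UniformlyApproximable P hP a A (hierarchyLevel d N P A K F CLip (l + 1)) := by
  obtain ⟨C₁, D₁, hlevel⟩ := h
  obtain ⟨C₂, D₂, hblock⟩ := exists_scaledReluNet_approx_at_maxRate (by linarith) K hP hβ hd
  set m := P.sup Prod.snd
  have hm : ∀ p ∈ P, p.2 ≤ m := fun _ hp => Finset.le_sup (f := Prod.snd) hp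
  refine ⟨C₁ + (Fintype.card (Fin (N (l + 1))) + 1) * (1 + C₂ + 2 * m + 1 + 3)
    + 2 * N l + 1, D₂ + |CLip| * (m * |D₁|), ?_⟩
  filter_upwards [hlevel, Filter.eventually_ge_atTop 2,
    eventually_mul_maxRate_le_one hP hβ (D₂ + |CLip| * (m * |D₁|))] with n hlevel hn hrate
  rintro f ⟨h, hh, hf⟩
  obtain ⟨φ, hφ, hφh⟩ := hlevel h hh
  choose p hp g hg e hfg using hf
  choose ψ hψ hψg using fun i => hblock (p i) (hp i) (g i) (hg i).holder n hn
  have hV := widthScale_pos hP hβ (by omega : 1 ≤ n)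
  have : NeZero (widthScale P hP n) := ⟨hV.ne'⟩
  have : NeZero (depthScale n) := ⟨(depthScale_pos hn).ne'⟩
  refine ⟨fun x i => ψ i fun j => φ x (e i j), hφ.comp_blocks hψ e ?_ fun i => ?_,
    fun x hx i => ?_⟩
  · simpa only [Fintype.card_fin] using Nat.le_mul_of_pos_right (2 * N l) hV
  · rw [Fintype.card_fin]
    exact (Nat.mul_le_mul_left 2 (hm _ (hp i))).trans (Nat.le_mul_of_pos_right _ hV)
  have hR := maxRate_nonneg hP n
  have herr : |(ψ i fun j => φ x (e i j)) - f x i|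
      ≤ (D₂ + |CLip| * (m * |D₁|)) * maxRate P hP n := by
    rw [hfg]
    calc _ ≤ D₂ * maxRate P hP n + |CLip| * ((p i).2 * (|D₁| * maxRate P hP n)) :=
          (hg i).abs_sub_le (hψg i _ fun j => abs_le.1 (hφh x hx (e i j)).2) fun j =>
            (hφh x hx (e i j)).1.trans (mul_le_mul_of_nonneg_right (le_abs_self D₁) hR)
      _ ≤ D₂ * maxRate P hP n + |CLip| * (m * (|D₁| * maxRate P hP n)) := by
          gcongr
          exact hm _ (hp i)
      _ = (D₂ + |CLip| * (m * |D₁|)) * maxRate P hP n := by ring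
  have hfF : |f x i| ≤ F := by
    rw [hfg]
    exact (hg i).abs_le _
  refine ⟨herr, ?_⟩
  linarith [abs_sub_abs_le_abs_sub (ψ i fun j => φ x (e i j)) (f x i)]

theorem uniformlyApproximable_hierarchyLevel (hβ : ∀ p ∈ P, 0 < p.1) (hd : ∀ p ∈ P, 0 < p.2)
    (hF : 1 ≤ F) (haA : a ≤ A) (hA : 2 * F ≤ A) (K CLip : ℝ) :
    UniformlyApproximable P hP a A (hierarchyLevel d N P A K F CLip l) := by
  induction l with
  | zero =>
    refine ⟨1, 0, .of_forall fun n f ⟨e, hf⟩ => ⟨_, ScaledReluNet.coord e, fun x hx i => ?_⟩⟩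
    exact ⟨by simp [hf], (abs_le.2 (hx (e i))).trans haA⟩
  | succ l ih => exact ih.hierarchyLevel_succ hβ hd hF hA

end Hierarchy

theorem ScaledReluNet.memDNN_of_scales {P : Finset (ℝ × ℕ)} (hP : P.Nonempty)
    (hβ : ∀ p ∈ P, 0 < p.1) {ν : ℝ} (hν : |ν| < 1) {d C n : ℕ} (hn : 2 ≤ n)
    {f : (Fin d → ℝ) → ℝ}
    (hf : ScaledReluNet C (widthScale P hP n) (depthScale n) fun x (_ : Unit) => f x) :
    _root_.memDNN ν d ⌈2 * ((C : ℝ) + 1) * Real.logb 2 n⌉₊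
      ⌈4 * ((C : ℝ) + 2) * maxWidthExp P hP n⌉₊ (1 / (1 - ν ^ 2) * ((C : ℝ) + 3)) f := by
  have : NeZero (widthScale P hP n) := ⟨(widthScale_pos hP hβ (by omega)).ne'⟩
  have hlog := one_le_logb_two hn
  have hdepth : ((C * depthScale n : ℕ) : ℝ) ≤ 2 * ((C : ℝ) + 1) * Real.logb 2 n := by
    push_cast
    nlinarith [depthScale_le hn]
  have hwidth : ((2 * (C + 2) * widthScale P hP n : ℕ) : ℝ)
      ≤ 4 * ((C : ℝ) + 2) * maxWidthExp P hP n := by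
    push_cast
    nlinarith [widthScale_le hP hβ (by omega : 1 ≤ n)]
  exact hf.memDNN hν (by exact_mod_cast hdepth.trans (Nat.le_ceil _))
    (Nat.ceil_pos.2 (by positivity)) (by exact_mod_cast hwidth.trans (Nat.le_ceil _))

theorem dnn_approximation_of_hierarchical_composition_general
    (a : ℝ) (d : ℕ) (ν : ℝ) (hν : |ν| < 1) (q : ℕ) (N : ℕ → ℕ) (P : Finset (ℝ × ℕ))
    (hP : P.Nonempty) (hβ : ∀ p ∈ P, 0 < p.1) (hd : ∀ p ∈ P, 0 < p.2)
    (K F CLip : ℝ) (hF : 1 ≤ F) :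
    ∃ CL Cr CB c₂ : ℝ, 0 < CL ∧ 0 < Cr ∧ 0 < CB ∧ 0 < c₂ ∧
      ∃ n₀ : ℕ, ∀ f₀ : (Fin d → ℝ) → ℝ, followsHCS a d q N P K F CLip f₀ →
        ∀ n : ℕ, n₀ ≤ n →
          ∃ f : (Fin d → ℝ) → ℝ,
            memDNN ν d ⌈CL * Real.logb 2 n⌉₊ ⌈Cr * maxWidthExp P hP n⌉₊ CB f ∧
            ∀ x ∈ cube a d, |f x - f₀ x| ≤ c₂ * maxRate P hP n := by
  obtain ⟨C, D, hlevel⟩ := uniformlyApproximable_hierarchyLevel (d := d) (N := N) (l := q)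
    (hP := hP) hβ hd hF (le_max_left a (2 * F)) (le_max_right a (2 * F)) K CLip
  obtain ⟨n₀, hn₀⟩ := Filter.eventually_atTop.1 (hlevel.and (Filter.eventually_ge_atTop 2))
  have hν' : 0 < 1 - ν ^ 2 := sub_pos.2 ((sq_lt_one_iff_abs_lt_one ν).2 hν)
  refine ⟨2 * (C + 1), 4 * (C + 2), 1 / (1 - ν ^ 2) * ((C : ℝ) + 3), |D| + 1,
    by positivity, by positivity, by positivity, by positivity, n₀, fun f₀ hf₀ n hn => ?_⟩
  obtain ⟨h, hh, i, hf₀h⟩ := hf₀.exists_mem_hierarchyLevel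
  obtain ⟨hlevel, hn₂⟩ := hn₀ n hn
  obtain ⟨φ, hφ, hφh⟩ := hlevel h hh
  refine ⟨fun x => φ x i, (hφ.reindex fun _ => i).memDNN_of_scales hP hβ hν hn₂,
    fun x hx => ?_⟩
  rw [hf₀h]
  exact (hφh x hx i).1.trans (mul_le_mul_of_nonneg_right
    ((le_abs_self D).trans (lt_add_one _).le) (maxRate_nonneg hP n))

/-- approximation of hierarchical composition functions by fully connected
Leaky-ReLU networks with bounded parameters.  There are constants `C̃_L, C̃_r, C̃_B, c₂ > 0`
such that every `f₀` following `H(N, P)` is, for every sufficiently large `n`, approximated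
within `c₂ · max_{(β',d') ∈ P} n^{−β'/(2β'+d')}` in sup-norm on `[−a,a]^d` by a network in
`F_{ρν}^{DNN}(⌈C̃_L log₂ n⌉, ⌈C̃_r · max_{(β',d') ∈ P} n^{d'/(2(2β'+d'))}⌉, C̃_B)`. -/
theorem dnn_approximation_of_hierarchical_composition
    (a : ℝ) (ha : 1 ≤ a) (d : ℕ) (hd : 0 < d) (ν : ℝ) (hν0 : 0 ≤ ν) (hν1 : ν < 1)
    (q : ℕ) (N : ℕ → ℕ) (P : Finset (ℝ × ℕ)) (hP : P.Nonempty)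
    (βmin βmax : ℝ) (dmax : ℕ) (hβmin : 0 < βmin)
    (hPsub : ∀ p ∈ P, βmin ≤ p.1 ∧ p.1 ≤ βmax ∧ 1 ≤ p.2 ∧ p.2 ≤ dmax)
    (K F CLip : ℝ) (hK : 1 ≤ K) (hF : 1 ≤ F) (hCLip : 1 ≤ CLip) :
    ∃ CL Cr CB c₂ : ℝ, 0 < CL ∧ 0 < Cr ∧ 0 < CB ∧ 0 < c₂ ∧
      ∀ f₀ : (Fin d → ℝ) → ℝ, followsHCS a d q N P K F CLip f₀ →
        ∃ n₀ : ℕ, ∀ n : ℕ, n₀ ≤ n →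
          ∃ f : (Fin d → ℝ) → ℝ,
            memDNN ν d ⌈CL * Real.logb 2 n⌉₊ ⌈Cr * maxWidthExp P hP n⌉₊ CB f ∧
            ∀ x ∈ cube a d, |f x - f₀ x| ≤ c₂ * maxRate P hP n := by
  obtain ⟨CL, Cr, CB, c₂, hCL, hCr, hCB, hc₂, n₀, h⟩ :=
    dnn_approximation_of_hierarchical_composition_general a d ν (by rwa [abs_of_nonneg hν0]) q N P
      hP (fun p hp => hβmin.trans_le (hPsub p hp).1) (fun p hp => (hPsub p hp).2.2.1) K F CLip hF
  exact ⟨CL, Cr, CB, c₂, hCL, hCr, hCB, hc₂, fun f₀ hf₀ => ⟨n₀, h f₀ hf₀⟩⟩
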